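/- Let T be a sound, recursively axiomatized extension of elementary arithmetic. There is a limit-recursive (i.e., recursive in the halting problem but not recursive) monotone function g on arithmetic sentences such that g(φ) is a Π₁ sentence for every φ, yet for arbitrarily strong true sentences φ (cofinally in the ultrafilter of true sentences ordered by implication over T) [φ ∧ g(φ)]_T = [φ ∧ Con_T(φ)]_T, and for arbitrarily strong true sentences φ, [φ ∧ g(φ)]_T = [φ]_T. -/

import Mathlib

open FirstOrder FirstOrder.Language

namespace ArithFormalization

/-- Function symbols of the first-order language of arithmetic: `0`, successor, `+`, `·`. -/
inductive Func : ℕ → Type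
  | zero : Func 0
  | succ : Func 1
  | add : Func 2
  | mul : Func 2
  deriving DecidableEq

/-- Relation symbols of the first-order language of arithmetic: `≤`. -/
inductive Rel : ℕ → Type
  | le : Rel 2
  deriving DecidableEq

/-- The first-order language of arithmetic. -/
def L : Language := ⟨Func, Rel⟩

/-- The standard model of arithmetic: `ℕ` as an `L`-structure. -/
instance natStructure : L.Structure ℕ where
  funMap {n} f v :=
    match f with
    | .zero => 0
    | .succ => v 0 + 1
    | .add => v 0 + v 1
    | .mul => v 0 * v 1
  RelMap {n} r v :=
    match r with
    | .le => v 0 ≤ v 1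

instance : Encodable (Σ n, L.Functions n) :=
  Encodable.ofEquiv (Fin 4)
    { toFun := fun x =>
        match x with
        | ⟨_, .zero⟩ => 0
        | ⟨_, .succ⟩ => 1
        | ⟨_, .add⟩ => 2
        | ⟨_, .mul⟩ => 3
      invFun := ![⟨0, .zero⟩, ⟨1, .succ⟩, ⟨2, .add⟩, ⟨2, .mul⟩]
      left_inv := by rintro ⟨_, f⟩ <;> cases f <;> rfl
      right_inv := by decide }

instance : Encodable (Σ n, L.Relations n) :=
  Encodable.ofEquiv (Fin 1)
    { toFun := fun _ => 0
      invFun := ![⟨2, .le⟩]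
      left_inv := by rintro ⟨_, r⟩ <;> cases r <;> rfl
      right_inv := by decide }

/-- Sentences of the language of arithmetic. -/
abbrev Sent : Type := L.Sentence

/-- A canonical Gödel numbering of sentences of arithmetic. -/
def gnum (φ : Sent) : ℕ :=
  Encodable.encode (BoundedFormula.listEncode φ)

/-- `φ` is true in the standard model `ℕ`. -/
def TrueInN (φ : Sent) : Prop := ℕ ⊨ φ

/-- `Prov T φ`: `φ` is provable from the theory `T` (by Gödel's completeness theorem,
provability coincides with semantic consequence). -/
def Prov (T : L.Theory) (φ : Sent) : Prop := T ⊨ᵇ φ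

/-- `Implies T φ ψ`: `φ` implies `ψ` over `T`, i.e. `T + φ ⊢ ψ`. -/
def Implies (T : L.Theory) (φ ψ : Sent) : Prop := Prov (T ∪ {φ}) ψ

/-- `φ` strictly implies `ψ` over `T`. -/
def StrictlyImplies (T : L.Theory) (φ ψ : Sent) : Prop :=
  Implies T φ ψ ∧ ¬ Implies T ψ φ

/-- The theory `T + φ` is consistent. -/
def ConsistentWith (T : L.Theory) (φ : Sent) : Prop := ¬ Implies T φ ⊥

/-- `[φ]_T = [ψ]_T`: `φ` and `ψ` are `T`-provably equivalent. -/
def EquivMod (T : L.Theory) (φ ψ : Sent) : Prop := Prov T (φ ⇔ ψ)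

/-- The theory `T` is sound, i.e. all of its axioms are true in `ℕ`. -/
def Sound (T : L.Theory) : Prop := ∀ φ ∈ T, TrueInN φ

/-- The theory `T` is recursively axiomatized: membership of (Gödel codes of) axioms
is decided by a total recursive function. -/
def RecursivelyAxiomatized (T : L.Theory) : Prop :=
  ∃ f : ℕ → Bool, Computable f ∧ ∀ φ : Sent, (φ ∈ T ↔ f (gnum φ) = true)

/-- A function on sentences is recursive if it is computed by a total recursive
function on Gödel codes. -/
def RecursiveFn (g : Sent → Sent) : Prop :=
  ∃ f : ℕ → ℕ, Computable f ∧ ∀ φ : Sent, f (gnum φ) = gnum (g φ)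

/-- `g` is monotone over `T`: if `T ⊢ φ → ψ` then `T ⊢ g(φ) → g(ψ)`. -/
def Monotone' (T : L.Theory) (g : Sent → Sent) : Prop :=
  ∀ φ ψ : Sent, Prov T (φ ⟹ ψ) → Prov T (g φ ⟹ g ψ)

/-- The atomic formula `t ≤ u`. -/
def leF {n : ℕ} (t u : L.Term (Empty ⊕ Fin n)) : L.BoundedFormula Empty n :=
  Relations.boundedFormula₂ (Rel.le : L.Relations 2) t u

/-- `Δ₀` (bounded) formulas of arithmetic: built from atomic formulas by propositional
connectives and bounded quantification `∀ x ≤ t`, `∃ x ≤ t`. -/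
inductive IsDelta0 : ∀ {n : ℕ}, L.BoundedFormula Empty n → Prop
  | falsum {n} : IsDelta0 (n := n) ⊥
  | equal {n} (t u : L.Term (Empty ⊕ Fin n)) : IsDelta0 (t.bdEqual u)
  | le {n} (t u : L.Term (Empty ⊕ Fin n)) : IsDelta0 (leF t u)
  | imp {n} {φ ψ : L.BoundedFormula Empty n} :
      IsDelta0 φ → IsDelta0 ψ → IsDelta0 (φ.imp ψ)
  | ball {n} (t : L.Term (Empty ⊕ Fin n)) {φ : L.BoundedFormula Empty (n + 1)} :
      IsDelta0 φ →
      IsDelta0 (((leF (Term.var (Sum.inr (Fin.last n)))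
        (t.relabel (Sum.map id Fin.castSucc))).imp φ).all)
  | bex {n} (t : L.Term (Empty ⊕ Fin n)) {φ : L.BoundedFormula Empty (n + 1)} :
      IsDelta0 φ →
      IsDelta0 (((leF (Term.var (Sum.inr (Fin.last n)))
        (t.relabel (Sum.map id Fin.castSucc))) ⊓ φ).ex)

/-- `φ` is a `Π₁` sentence: a block of universal quantifiers followed by a `Δ₀` matrix. -/
def IsPi1 (φ : Sent) : Prop :=
  ∃ (n : ℕ) (θ : L.BoundedFormula Empty n), IsDelta0 θ ∧ φ = θ.alls

/-- `φ` is a `Σ₁` sentence: a block of existential quantifiers followed by a `Δ₀` matrix. -/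
def IsSigma1 (φ : Sent) : Prop :=
  ∃ (n : ℕ) (θ : L.BoundedFormula Empty n), IsDelta0 θ ∧ φ = θ.exs

/-- Close the last `m` free variables of a bounded formula by universal quantifiers. -/
def allsFrom : ∀ (n m : ℕ), L.BoundedFormula Empty (n + m) → L.BoundedFormula Empty n
  | _, 0, φ => φ
  | n, m + 1, φ => allsFrom n m φ.all

/-- `φ` is a `Σ₂` sentence: `∃-block ∀-block Δ₀`. -/
def IsSigma2 (φ : Sent) : Prop :=
  ∃ (n m : ℕ) (θ : L.BoundedFormula Empty (n + m)), IsDelta0 θ ∧ φ = (allsFrom n m θ).exs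

/-- Hypotheses making `ea` a correct stand-in for elementary arithmetic `EA`:
it is sound, recursively axiomatized, and proves every true `Σ₁` sentence. -/
structure IsEA (ea : L.Theory) : Prop where
  sound : Sound ea
  recAx : RecursivelyAxiomatized ea
  sigma1_complete : ∀ φ : Sent, IsSigma1 φ → TrueInN φ → Prov ea φ

/-- Hypotheses making `con` a correct stand-in for the arithmetized consistency operator
`φ ↦ Con_T(φ)` (`Con` of the theory `T + φ`): each value is `Π₁`, its truth in `ℕ`
expresses exactly the consistency of `T + φ`, consistency statements are `T`-provably
antitone in the strength of `φ`, and Gödel's second incompleteness theorem holds for it. -/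
structure IsConOperator (T : L.Theory) (con : Sent → Sent) : Prop where
  pi1 : ∀ φ, IsPi1 (con φ)
  true_iff : ∀ φ, TrueInN (con φ) ↔ ConsistentWith T φ
  prov_mono : ∀ φ ψ, Implies T φ ψ → Prov T (con φ ⟹ con ψ)
  goedel2 : ∀ φ, ConsistentWith T φ → ¬ Implies T φ (con φ)


/-- The theory `T` is consistent. -/
def Consistent (T : L.Theory) : Prop := ¬ Prov T ⊥

/-! ### Raw numeric codes -/

def tZ : ℕ := 0
def tV (i : ℕ) : ℕ := 5 * i + 1
def tS (t : ℕ) : ℕ := 5 * t + 2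
def tA (t u : ℕ) : ℕ := 5 * Nat.pair t u + 3
def tM (t u : ℕ) : ℕ := 5 * Nat.pair t u + 4
def fF (n : ℕ) : ℕ := 5 * n
def fE (n t u : ℕ) : ℕ := 5 * Nat.pair n (Nat.pair t u) + 1
def fL (n t u : ℕ) : ℕ := 5 * Nat.pair n (Nat.pair t u) + 2
def fI (a b : ℕ) : ℕ := 5 * Nat.pair a b + 3
def fA (a : ℕ) : ℕ := 5 * a + 4

def srec {σ : Type*} (h : ℕ → σ → σ → σ → σ) (d : σ) (c : ℕ) : σ :=
  if _hc : c = 0 then h 0 d d d else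
    h c (srec h d (c / 5)) (srec h d (Nat.unpair (c / 5)).1) (srec h d (Nat.unpair (c / 5)).2)
termination_by c
decreasing_by
  · omega
  · have := Nat.unpair_left_le (c / 5); omega
  · have := Nat.unpair_right_le (c / 5); omega

theorem srec_pos {σ : Type*} (h : ℕ → σ → σ → σ → σ) (d : σ) {c : ℕ} (hc : c ≠ 0) :
    srec h d c = h c (srec h d (c / 5)) (srec h d (Nat.unpair (c / 5)).1)
      (srec h d (Nat.unpair (c / 5)).2) := by
  rw [srec, dif_neg hc]

theorem srec_zero {σ : Type*} (h : ℕ → σ → σ → σ → σ) (d : σ) :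
    srec h d 0 = h 0 d d d := by
  rw [srec, dif_pos rfl]

theorem srec_eq1 {σ : Type*} (h : ℕ → σ → σ → σ → σ) (d : σ) (k r : ℕ) (hr : r < 5) (h0 : r ≠ 0) :
    srec h d (5 * k + r) = h (5 * k + r) (srec h d k) (srec h d (Nat.unpair k).1)
      (srec h d (Nat.unpair k).2) := by
  have : (5 * k + r) / 5 = k := by omega
  rw [srec_pos _ _ (by omega), this]

theorem prim_srec {σ : Type*} [Primcodable σ] {h : ℕ → σ → σ → σ → σ} (d : σ)
    (hh : Primrec fun p : ℕ × σ × σ × σ => h p.1 p.2.1 p.2.2.1 p.2.2.2) :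
    Primrec (srec h d) := by
  have key : Primrec₂ (fun (_ : Unit) (n : ℕ) => srec h d n) := by
    refine Primrec.nat_strong_rec (fun (_ : Unit) (n : ℕ) => srec h d n)
      (g := fun _ l => some (h l.length (l.getD (l.length / 5) d)
        (l.getD (Nat.unpair (l.length / 5)).1 d) (l.getD (Nat.unpair (l.length / 5)).2 d))) ?_ ?_
    · have hl : Primrec (fun p : Unit × List σ => p.2) := Primrec.snd
      have hlen : Primrec (fun p : Unit × List σ => p.2.length) := Primrec.list_length.comp hl
      have hk : Primrec (fun p : Unit × List σ => p.2.length / 5) :=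
        Primrec.nat_div.comp hlen (Primrec.const 5)
      have hu := Primrec.unpair.comp hk
      have hg := Primrec.list_getD d
      exact Primrec.option_some.comp (hh.comp (hlen.pair ((hg.comp hl hk).pair
        ((hg.comp hl (Primrec.fst.comp hu)).pair (hg.comp hl (Primrec.snd.comp hu))))))
    · intro _ n
      have hget : ∀ i, i < n → ((List.range n).map (srec h d)).getD i d = srec h d i := by
        intro i hi
        simp [List.getD, hi]
      have h1 := Nat.unpair_left_le (n / 5)
      have h2 := Nat.unpair_right_le (n / 5)
      simp only [List.length_map, List.length_range]
      rcases Nat.eq_zero_or_pos n with rfl | hn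
      · simp [srec_zero]
      · rw [hget _ (by omega), hget _ (by omega), hget _ (by omega), srec_pos h d (c := n) (by omega)]
  exact key.comp (Primrec.const ()) Primrec.id

theorem tcases (c : ℕ) : (∃ k, c = 5 * k) ∨ (∃ i, c = tV i) ∨ (∃ t, c = tS t) ∨
    (∃ t u, c = tA t u) ∨ (∃ t u, c = tM t u) := by
  have h : c % 5 < 5 := Nat.mod_lt _ (by norm_num)
  have h2 := Nat.pair_unpair (c / 5)
  rcases (by omega : c % 5 = 0 ∨ c % 5 = 1 ∨ c % 5 = 2 ∨ c % 5 = 3 ∨ c % 5 = 4) with h|h|h|h|h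
  · exact Or.inl ⟨c / 5, by omega⟩
  · exact Or.inr (Or.inl ⟨c / 5, by unfold tV; omega⟩)
  · exact Or.inr (Or.inr (Or.inl ⟨c / 5, by unfold tS; omega⟩))
  · exact Or.inr (Or.inr (Or.inr (Or.inl ⟨_, _, by unfold tA; rw [h2]; omega⟩)))
  · exact Or.inr (Or.inr (Or.inr (Or.inr ⟨_, _, by unfold tM; rw [h2]; omega⟩)))

theorem fcases (c : ℕ) : (∃ n, c = fF n) ∨ (∃ n t u, c = fE n t u) ∨ (∃ n t u, c = fL n t u) ∨
    (∃ t u, c = fI t u) ∨ (∃ a, c = fA a) := by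
  have h : c % 5 < 5 := Nat.mod_lt _ (by norm_num)
  have h2 := Nat.pair_unpair (c / 5)
  have h3 := Nat.pair_unpair (c / 5).unpair.2
  rcases (by omega : c % 5 = 0 ∨ c % 5 = 1 ∨ c % 5 = 2 ∨ c % 5 = 3 ∨ c % 5 = 4) with h|h|h|h|h
  · exact Or.inl ⟨c / 5, by unfold fF; omega⟩
  · exact Or.inr (Or.inl ⟨_, _, _, by unfold fE; rw [h3, h2]; omega⟩)
  · exact Or.inr (Or.inr (Or.inl ⟨_, _, _, by unfold fL; rw [h3, h2]; omega⟩))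
  · exact Or.inr (Or.inr (Or.inr (Or.inl ⟨_, _, by unfold fI; rw [h2]; omega⟩)))
  · exact Or.inr (Or.inr (Or.inr (Or.inr ⟨c / 5, by unfold fA; omega⟩)))

theorem tcode_ind {P : ℕ → Prop} (h0 : ∀ k, P (5 * k)) (hV : ∀ i, P (tV i)) (hS : ∀ t, P t → P (tS t))
    (hA : ∀ t u, P t → P u → P (tA t u)) (hM : ∀ t u, P t → P u → P (tM t u)) (c : ℕ) : P c := by
  induction c using Nat.strong_induction_on with
  | _ c ih =>
    rcases tcases c with ⟨k, rfl⟩ | ⟨k, rfl⟩ | ⟨k, rfl⟩ | ⟨t, u, rfl⟩ | ⟨t, u, rfl⟩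
    · exact h0 k
    · exact hV k
    · exact hS k (ih _ (by unfold tS; omega))
    · have h1 := Nat.left_le_pair t u
      have h2 := Nat.right_le_pair t u
      exact hA t u (ih _ (by unfold tA; omega)) (ih _ (by unfold tA; omega))
    · have h1 := Nat.left_le_pair t u
      have h2 := Nat.right_le_pair t u
      exact hM t u (ih _ (by unfold tM; omega)) (ih _ (by unfold tM; omega))

theorem fcode_ind {P : ℕ → Prop} (h0 : ∀ n, P (fF n)) (hE : ∀ n t u, P (fE n t u))
    (hL : ∀ n t u, P (fL n t u)) (hI : ∀ t u, P t → P u → P (fI t u))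
    (hA : ∀ a, P a → P (fA a)) (c : ℕ) : P c := by
  induction c using Nat.strong_induction_on with
  | _ c ih =>
    rcases fcases c with ⟨k, rfl⟩ | ⟨n, t, u, rfl⟩ | ⟨n, t, u, rfl⟩ | ⟨t, u, rfl⟩ | ⟨a, rfl⟩
    · exact h0 k
    · exact hE n t u
    · exact hL n t u
    · have h1 := Nat.left_le_pair t u
      have h2 := Nat.right_le_pair t u
      exact hI t u (ih _ (by unfold fI; omega)) (ih _ (by unfold fI; omega))
    · exact hA a (ih _ (by unfold fA; omega))

/-- recursor for terms -/
def trec {σ : Type*} (z : ℕ → σ) (v : ℕ → σ) (s : σ → σ) (a m : σ → σ → σ) : ℕ → σ :=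
  srec (fun c x y w => if c % 5 = 0 then z c else if c % 5 = 1 then v (c / 5) else
    if c % 5 = 2 then s x else if c % 5 = 3 then a y w else m y w) (z 0)

section
variable {σ : Type*} (z : ℕ → σ) (v : ℕ → σ) (s : σ → σ) (a m : σ → σ → σ)
theorem trec_Z (k : ℕ) : trec z v s a m (5 * k) = z (5 * k) := by
  rcases Nat.eq_zero_or_pos k with rfl | h
  · simp [trec, srec_zero]
  · rw [trec, srec_pos _ _ (by omega), if_pos (by omega)]
theorem trec_V (i : ℕ) : trec z v s a m (tV i) = v i := by
  rw [trec, tV, srec_eq1 _ _ _ _ (by norm_num) (by norm_num), if_neg (by omega), if_pos (by omega)]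
  congr 1; omega
theorem trec_S (t : ℕ) : trec z v s a m (tS t) = s (trec z v s a m t) := by
  rw [trec, tS, srec_eq1 _ _ _ _ (by norm_num) (by norm_num), if_neg (by omega), if_neg (by omega),
    if_pos (by omega)]
theorem trec_A (t u : ℕ) : trec z v s a m (tA t u) = a (trec z v s a m t) (trec z v s a m u) := by
  rw [trec, tA, srec_eq1 _ _ _ _ (by norm_num) (by norm_num), if_neg (by omega), if_neg (by omega),
    if_neg (by omega), if_pos (by omega), Nat.unpair_pair]
theorem trec_M (t u : ℕ) : trec z v s a m (tM t u) = m (trec z v s a m t) (trec z v s a m u) := by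
  rw [trec, tM, srec_eq1 _ _ _ _ (by norm_num) (by norm_num), if_neg (by omega), if_neg (by omega),
    if_neg (by omega), if_neg (by omega), Nat.unpair_pair]
end

/-- recursor for formulas -/
def frec {σ : Type*} (F : ℕ → σ) (E Q : ℕ → ℕ → ℕ → σ) (I : ℕ → ℕ → σ → σ → σ) (A : ℕ → σ → σ) :
    ℕ → σ :=
  srec (fun c x y w => if c % 5 = 0 then F (c / 5) else
    if c % 5 = 1 then E (c / 5).unpair.1 (c / 5).unpair.2.unpair.1 (c / 5).unpair.2.unpair.2 else
    if c % 5 = 2 then Q (c / 5).unpair.1 (c / 5).unpair.2.unpair.1 (c / 5).unpair.2.unpair.2 else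
    if c % 5 = 3 then I (c / 5).unpair.1 (c / 5).unpair.2 y w else A (c / 5) x) (F 0)

section
variable {σ : Type*} (F : ℕ → σ) (E Q : ℕ → ℕ → ℕ → σ) (I : ℕ → ℕ → σ → σ → σ) (A : ℕ → σ → σ)
theorem frec_F (k : ℕ) : frec F E Q I A (fF k) = F k := by
  rcases Nat.eq_zero_or_pos k with rfl | h
  · simp [frec, fF, srec_zero]
  · rw [frec, fF, srec_pos _ _ (by omega), if_pos (by omega)]
    congr 1; omega
theorem frec_E (n t u : ℕ) : frec F E Q I A (fE n t u) = E n t u := by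
  have h (k : ℕ) : (5 * k + 1) / 5 = k := by omega
  rw [frec, fE, srec_eq1 _ _ _ _ (by norm_num) (by norm_num), if_neg (by omega), if_pos (by omega)]
  simp [h]
theorem frec_L (n t u : ℕ) : frec F E Q I A (fL n t u) = Q n t u := by
  have h (k : ℕ) : (5 * k + 2) / 5 = k := by omega
  rw [frec, fL, srec_eq1 _ _ _ _ (by norm_num) (by norm_num), if_neg (by omega), if_neg (by omega),
    if_pos (by omega)]
  simp [h]
theorem frec_I (a b : ℕ) : frec F E Q I A (fI a b) = I a b (frec F E Q I A a) (frec F E Q I A b) := by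
  have h (k : ℕ) : (5 * k + 3) / 5 = k := by omega
  rw [frec, fI, srec_eq1 _ _ _ _ (by norm_num) (by norm_num), if_neg (by omega), if_neg (by omega),
    if_neg (by omega), if_pos (by omega), h, Nat.unpair_pair]
theorem frec_A (a : ℕ) : frec F E Q I A (fA a) = A a (frec F E Q I A a) := by
  have h (k : ℕ) : (5 * k + 4) / 5 = k := by omega
  rw [frec, fA, srec_eq1 _ _ _ _ (by norm_num) (by norm_num), if_neg (by omega), if_neg (by omega),
    if_neg (by omega), if_neg (by omega), h]
end

theorem prim_trec {σ : Type*} [Primcodable σ] {z v : ℕ → σ} {s : σ → σ} {a m : σ → σ → σ}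
    (hz : Primrec z) (hv : Primrec v) (hs : Primrec s) (ha : Primrec₂ a) (hm : Primrec₂ m) :
    Primrec (trec z v s a m) := by
  apply prim_srec
  have c : Primrec (fun p : ℕ × σ × σ × σ => p.1) := Primrec.fst
  have c5 := Primrec.nat_mod.comp c (Primrec.const 5)
  have d5 := Primrec.nat_div.comp c (Primrec.const 5)
  have x : Primrec (fun p : ℕ × σ × σ × σ => p.2.1) := Primrec.fst.comp Primrec.snd
  have y : Primrec (fun p : ℕ × σ × σ × σ => p.2.2.1) := Primrec.fst.comp (Primrec.snd.comp Primrec.snd)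
  have w : Primrec (fun p : ℕ × σ × σ × σ => p.2.2.2) := Primrec.snd.comp (Primrec.snd.comp Primrec.snd)
  have e (k : ℕ) : PrimrecPred (fun p : ℕ × σ × σ × σ => p.1 % 5 = k) :=
    Primrec.eq.comp c5 (Primrec.const k)
  exact Primrec.ite (e 0) (hz.comp c) (Primrec.ite (e 1) (hv.comp d5) (Primrec.ite (e 2) (hs.comp x)
    (Primrec.ite (e 3) (ha.comp y w) (hm.comp y w))))

theorem prim_frec {σ : Type*} [Primcodable σ] {F : ℕ → σ} {E Q : ℕ → ℕ → ℕ → σ}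
    {I : ℕ → ℕ → σ → σ → σ} {A : ℕ → σ → σ}
    (hF : Primrec F) (hE : Primrec fun p : ℕ × ℕ × ℕ => E p.1 p.2.1 p.2.2)
    (hQ : Primrec fun p : ℕ × ℕ × ℕ => Q p.1 p.2.1 p.2.2)
    (hI : Primrec fun p : (ℕ × ℕ) × σ × σ => I p.1.1 p.1.2 p.2.1 p.2.2)
    (hA : Primrec₂ A) : Primrec (frec F E Q I A) := by
  apply prim_srec
  have c : Primrec (fun p : ℕ × σ × σ × σ => p.1) := Primrec.fst
  have c5 := Primrec.nat_mod.comp c (Primrec.const 5)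
  have d5 := Primrec.nat_div.comp c (Primrec.const 5)
  have x : Primrec (fun p : ℕ × σ × σ × σ => p.2.1) := Primrec.fst.comp Primrec.snd
  have y : Primrec (fun p : ℕ × σ × σ × σ => p.2.2.1) := Primrec.fst.comp (Primrec.snd.comp Primrec.snd)
  have w : Primrec (fun p : ℕ × σ × σ × σ => p.2.2.2) := Primrec.snd.comp (Primrec.snd.comp Primrec.snd)
  have e (k : ℕ) : PrimrecPred (fun p : ℕ × σ × σ × σ => p.1 % 5 = k) :=
    Primrec.eq.comp c5 (Primrec.const k)
  have u := Primrec.unpair.comp d5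
  have u1 := Primrec.fst.comp u
  have u2 := Primrec.snd.comp u
  have w2 := Primrec.unpair.comp u2
  have tr := u1.pair ((Primrec.fst.comp w2).pair (Primrec.snd.comp w2))
  exact Primrec.ite (e 0) (hF.comp d5) (Primrec.ite (e 1) (hE.comp tr) (Primrec.ite (e 2) (hQ.comp tr)
    (Primrec.ite (e 3) (hI.comp ((u1.pair u2).pair (y.pair w))) (hA.comp d5 x))))

def fnZ : L.Functions 0 := Func.zero
def fnS : L.Functions 1 := Func.succ
def fnA : L.Functions 2 := Func.add
def fnM : L.Functions 2 := Func.mul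
def rlL : L.Relations 2 := Rel.le

section sem
variable (M : Type) [L.Structure M]
def vz : M := Structure.funMap (L := L) fnZ ![]
variable {M}
def vs (x : M) : M := Structure.funMap (L := L) fnS ![x]
def va (x y : M) : M := Structure.funMap (L := L) fnA ![x, y]
def vm (x y : M) : M := Structure.funMap (L := L) fnM ![x, y]
def vle (x y : M) : Prop := Structure.RelMap (L := L) rlL ![x, y]

def tval (env : List M) : ℕ → M :=
  trec (fun _ => vz M) (fun i => env.getD i (vz M)) vs va vm

def sem : ℕ → List M → Prop :=
  frec (fun _ _ => False) (fun _ t u env => tval env t = tval env u)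
    (fun _ t u env => vle (tval env t) (tval env u))
    (fun _ _ p q env => p env → q env) (fun _ p env => ∀ x, p (env ++ [x]))

variable (env : List M)
theorem tval_Z (k : ℕ) : tval env (5 * k) = vz M := trec_Z ..
theorem tval_V (i : ℕ) : tval env (tV i) = env.getD i (vz M) := trec_V ..
theorem tval_S (t : ℕ) : tval env (tS t) = vs (tval env t) := trec_S ..
theorem tval_A (t u : ℕ) : tval env (tA t u) = va (tval env t) (tval env u) := trec_A ..
theorem tval_M (t u : ℕ) : tval env (tM t u) = vm (tval env t) (tval env u) := trec_M ..
theorem sem_F (n : ℕ) : sem (fF n) env ↔ False := by rw [sem, frec_F]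
theorem sem_E (n t u : ℕ) : sem (fE n t u) env ↔ tval env t = tval env u := by rw [sem, frec_E]
theorem sem_L (n t u : ℕ) : sem (fL n t u) env ↔ vle (tval env t) (tval env u) := by
  rw [sem, frec_L]
theorem sem_I (a b : ℕ) : sem (fI a b) env ↔ (sem a env → sem b env) := by
  rw [sem, frec_I]
theorem sem_A (a : ℕ) : sem (fA a) env ↔ ∀ x, sem a (env ++ [x]) := by
  rw [sem, frec_A]
end sem

def fcode : ∀ {k : ℕ}, Func k → (Fin k → ℕ) → ℕ
  | _, .zero, _ => tZ
  | _, .succ, v => tS (v 0)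
  | _, .add, v => tA (v 0) (v 1)
  | _, .mul, v => tM (v 0) (v 1)

def rcode (n : ℕ) : ∀ {k : ℕ}, Rel k → (Fin k → ℕ) → ℕ
  | _, .le, v => fL n (v 0) (v 1)

def tcd {n : ℕ} : L.Term (Empty ⊕ Fin n) → ℕ
  | .var v => Sum.elim Empty.elim (fun i : Fin n => tV i.1) v
  | .func f ts => fcode f (fun i => tcd (ts i))

def cd : ∀ {n : ℕ}, L.BoundedFormula Empty n → ℕ
  | n, .falsum => fF n
  | n, .equal t u => fE n (tcd t) (tcd u)
  | n, .rel R ts => rcode n R (fun i => tcd (ts i))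
  | _, .imp φ ψ => fI (cd φ) (cd ψ)
  | _, .all φ => fA (cd φ)

theorem term_ind {n : ℕ} {P : L.Term (Empty ⊕ Fin n) → Prop}
    (hv : ∀ i : Fin n, P (.var (Sum.inr i)))
    (hz : ∀ ts, P (.func fnZ ts))
    (hs : ∀ ts, P (ts 0) → P (.func fnS ts))
    (ha : ∀ ts, P (ts 0) → P (ts 1) → P (.func fnA ts))
    (hm : ∀ ts, P (ts 0) → P (ts 1) → P (.func fnM ts))
    (t : L.Term (Empty ⊕ Fin n)) : P t := by
  induction t with
  | var v => rcases v with v | v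
             · exact v.elim
             · exact hv v
  | @func k f ts ih =>
    change Func k at f
    cases f
    · exact hz ts
    · exact hs ts (ih 0)
    · exact ha ts (ih 0) (ih 1)
    · exact hm ts (ih 0) (ih 1)

theorem form_ind {P : ∀ {n : ℕ}, L.BoundedFormula Empty n → Prop}
    (hf : ∀ n, P (BoundedFormula.falsum : L.BoundedFormula Empty n))
    (he : ∀ n (t u : L.Term (Empty ⊕ Fin n)), P (.equal t u))
    (hl : ∀ n (ts : Fin 2 → L.Term (Empty ⊕ Fin n)), P (.rel rlL ts))
    (hi : ∀ n (φ ψ : L.BoundedFormula Empty n), P φ → P ψ → P (.imp φ ψ))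
    (ha : ∀ n (φ : L.BoundedFormula Empty (n + 1)), P φ → P (.all φ))
    {n : ℕ} (φ : L.BoundedFormula Empty n) : P φ := by
  induction φ with
  | falsum => exact hf _
  | equal t u => exact he _ t u
  | @rel _ k R ts => change Rel k at R; cases R; exact hl _ ts
  | imp _ _ h1 h2 => exact hi _ _ _ h1 h2
  | all _ h => exact ha _ _ h

section
variable {M : Type} [L.Structure M]

theorem tval_tcd {n : ℕ} (xs : Fin n → M) (t : L.Term (Empty ⊕ Fin n)) :
    tval (List.ofFn xs) (tcd t) = t.realize (Sum.elim Empty.elim xs) := by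
  induction t using term_ind with
  | hv i => simp [tcd, tval_V, List.getD]
  | hz ts =>
    refine (tval_Z _ 0).trans ?_
    rw [Term.realize_func, vz]; congr 1; exact Subsingleton.elim _ _
  | hs ts h =>
    refine (tval_S _ _).trans ?_
    rw [Term.realize_func, vs, h]; congr 1; ext i; fin_cases i; rfl
  | ha ts h1 h2 =>
    refine (tval_A _ _ _).trans ?_
    rw [Term.realize_func, va, h1, h2]; congr 1; ext i; fin_cases i <;> rfl
  | hm ts h1 h2 =>
    refine (tval_M _ _ _).trans ?_
    rw [Term.realize_func, vm, h1, h2]; congr 1; ext i; fin_cases i <;> rfl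

theorem sem_cd {n : ℕ} (φ : L.BoundedFormula Empty n) : ∀ (xs : Fin n → M),
    sem (cd φ) (List.ofFn xs) ↔ φ.Realize Empty.elim xs := by
  induction φ using form_ind with
  | hf n => intro xs; rw [cd, sem_F]; rfl
  | he n t u => intro xs; rw [cd, sem_E, tval_tcd, tval_tcd]; rfl
  | hl n ts =>
    intro xs
    refine (sem_L _ _ _ _).trans ?_
    rw [tval_tcd, tval_tcd, BoundedFormula.Realize, vle]
    apply iff_of_eq; congr 1; ext i; fin_cases i <;> rfl
  | hi n φ ψ h1 h2 => intro xs; rw [cd, sem_I, h1, h2]; rfl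
  | ha n φ h =>
    intro xs; rw [cd, sem_A, BoundedFormula.realize_all]
    refine forall_congr' fun x => ?_
    rw [← h]
    rw [List.ofFn_succ' (Fin.snoc xs x)]
    simp

theorem sem_sent (φ : Sent) : sem (M := M) (cd φ) [] ↔ M ⊨ φ := by
  have := sem_cd (M := M) (n := 0) φ default
  simp only [List.ofFn_zero] at this
  rw [this, Sentence.Realize, Formula.Realize]
  apply iff_of_eq; congr 1; exact Subsingleton.elim _ _
end

/-! ### connecting raw codes with Gödel numbers -/

def tenc : ℕ → Option (ℕ × List ℕ) :=
  trec (fun c => if c = 0 then some (0, [1]) else none)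
    (fun i => some (i + 1, [2 * (2 * i + 1)]))
    (fun x => x.map fun p => (p.1, 3 :: p.2))
    (fun x y => x.bind fun p => y.map fun q => (max p.1 q.1, 5 :: (p.2 ++ q.2)))
    (fun x y => x.bind fun p => y.map fun q => (max p.1 q.1, 7 :: (p.2 ++ q.2)))

theorem prim_tenc : Primrec tenc := by
  apply prim_trec
  · exact Primrec.ite (Primrec.eq.comp Primrec.id (Primrec.const 0)) (Primrec.const _) (Primrec.const _)
  · refine Primrec.option_some.comp (Primrec.succ.pair ?_)
    refine Primrec.list_cons.comp ?_ (Primrec.const [])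
    exact Primrec.nat_mul.comp (Primrec.const 2) (Primrec.succ.comp
      (Primrec.nat_mul.comp (Primrec.const 2) Primrec.id))
  · refine Primrec.option_map Primrec.id ?_
    exact (Primrec.fst.comp Primrec.snd).pair
      (Primrec.list_cons.comp (Primrec.const 3) (Primrec.snd.comp Primrec.snd))
  all_goals
    refine Primrec.option_bind Primrec.fst ?_
    refine Primrec.option_map (Primrec.snd.comp Primrec.fst) ?_
    have p := (Primrec.snd (α := Option (ℕ × List ℕ) × Option (ℕ × List ℕ)) (β := ℕ × List ℕ)).comp (Primrec.fst (β := ℕ × List ℕ))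
    have q := Primrec.snd (α := (Option (ℕ × List ℕ) × Option (ℕ × List ℕ)) × ℕ × List ℕ) (β := ℕ × List ℕ)
    exact (Primrec.nat_max.comp (Primrec.fst.comp p) (Primrec.fst.comp q)).pair
      (Primrec.list_cons.comp (Primrec.const _) (Primrec.list_append.comp (Primrec.snd.comp p) (Primrec.snd.comp q)))

theorem encode_list_map {α : Type*} [Encodable α] (l : List α) :
    Encodable.encode l = Encodable.encode (l.map Encodable.encode) := by
  induction l with
  | nil => rfl
  | cons a l ih => simp [ih]

def tls {n : ℕ} (t : L.Term (Empty ⊕ Fin n)) : List ℕ := t.listEncode.map Encodable.encode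

theorem tenc_tcd {n : ℕ} (t : L.Term (Empty ⊕ Fin n)) :
    ∃ b ≤ n, tenc (tcd t) = some (b, tls t) := by
  induction t using term_ind with
  | hv i => 
    refine ⟨i + 1, i.2, ?_⟩
    rw [tenc]; exact (trec_V ..).trans rfl
  | hz ts =>
    refine ⟨0, Nat.zero_le _, ?_⟩
    rw [tenc]; exact (trec_Z _ _ _ _ _ 0).trans rfl
  | hs ts h =>
    obtain ⟨b, hb, h⟩ := h
    refine ⟨b, hb, ?_⟩
    rw [tenc]; refine (trec_S ..).trans ?_
    rw [← tenc, h]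
    simp [tls, Term.listEncode, List.finRange_succ]
    rfl
  | ha ts h1 h2 =>
    obtain ⟨b, hb, h1⟩ := h1
    obtain ⟨b', hb', h2⟩ := h2
    refine ⟨max b b', max_le hb hb', ?_⟩
    rw [tenc]; refine (trec_A ..).trans ?_
    rw [← tenc, h1, h2]
    simp [tls, Term.listEncode, List.finRange_succ]
    rfl
  | hm ts h1 h2 =>
    obtain ⟨b, hb, h1⟩ := h1
    obtain ⟨b', hb', h2⟩ := h2
    refine ⟨max b b', max_le hb hb', ?_⟩
    rw [tenc]; refine (trec_M ..).trans ?_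
    rw [← tenc, h1, h2]
    simp [tls, Term.listEncode, List.finRange_succ]
    rfl

theorem tenc_conv (c : ℕ) : ∀ b l, tenc c = some (b, l) → ∀ n ≥ b,
    ∃ t : L.Term (Empty ⊕ Fin n), tcd t = c := by
  induction c using tcode_ind with
  | h0 k =>
    intro b l h n hn
    rw [tenc, trec_Z] at h
    have hk : 5 * k = 0 := by by_contra h'; simp [h'] at h
    exact ⟨.func fnZ ![], by rw [hk]; rfl⟩
  | hV i =>
    intro b l h n hn
    rw [tenc, trec_V] at h
    simp at h
    exact ⟨.var (Sum.inr ⟨i, by omega⟩), rfl⟩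
  | hS t ih =>
    intro b l h n hn
    rw [tenc, trec_S, ← tenc] at h
    simp only [Option.map_eq_some_iff] at h
    obtain ⟨⟨b', l'⟩, h, e⟩ := h
    simp only [Prod.mk.injEq] at e
    obtain ⟨rfl, -⟩ := e
    obtain ⟨t', rfl⟩ := ih _ _ h n hn
    exact ⟨.func fnS ![t'], rfl⟩
  | hA t u ih1 ih2 =>
    intro b l h n hn
    rw [tenc, trec_A, ← tenc] at h
    simp only [Option.bind_eq_some_iff, Option.map_eq_some_iff] at h
    obtain ⟨⟨b1, l1⟩, h1, ⟨b2, l2⟩, h2, e⟩ := h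
    simp only [Prod.mk.injEq] at e
    obtain ⟨rfl, -⟩ := e
    obtain ⟨t', rfl⟩ := ih1 _ _ h1 n (le_trans (le_max_left _ _) hn)
    obtain ⟨u', rfl⟩ := ih2 _ _ h2 n (le_trans (le_max_right _ _) hn)
    exact ⟨.func fnA ![t', u'], rfl⟩
  | hM t u ih1 ih2 =>
    intro b l h n hn
    rw [tenc, trec_M, ← tenc] at h
    simp only [Option.bind_eq_some_iff, Option.map_eq_some_iff] at h
    obtain ⟨⟨b1, l1⟩, h1, ⟨b2, l2⟩, h2, e⟩ := h
    simp only [Prod.mk.injEq] at e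
    obtain ⟨rfl, -⟩ := e
    obtain ⟨t', rfl⟩ := ih1 _ _ h1 n (le_trans (le_max_left _ _) hn)
    obtain ⟨u', rfl⟩ := ih2 _ _ h2 n (le_trans (le_max_right _ _) hn)
    exact ⟨.func fnM ![t', u'], rfl⟩

/-- encoding of an atom -/
def aenc (pre : List ℕ) (n t u : ℕ) : Option (ℕ × List ℕ) :=
  (tenc t).bind fun p => (tenc u).bind fun q =>
    if p.1 ≤ n ∧ q.1 ≤ n then
      some (n, pre ++ [2 * Nat.pair n (Encodable.encode p.2), 2 * Nat.pair n (Encodable.encode q.2)])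
    else none

def fenc : ℕ → Option (ℕ × List ℕ) :=
  frec (fun n => some (n, [2 * (2 * (n + 2) + 1) + 1]))
    (fun n t u => aenc [] n t u)
    (fun n t u => aenc [1, 2 * (2 * n + 1) + 1] n t u)
    (fun _ _ x y => x.bind fun p => y.bind fun q =>
      if p.1 = q.1 then some (p.1, 3 :: (p.2 ++ q.2)) else none)
    (fun _ x => x.bind fun p => if p.1 = 0 then none else some (p.1 - 1, 7 :: p.2))

theorem prim_aenc {α : Type*} [Primcodable α] {pre : α → List ℕ} {n t u : α → ℕ}
    (hp : Primrec pre) (hn : Primrec n) (ht : Primrec t) (hu : Primrec u) :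
    Primrec fun a => aenc (pre a) (n a) (t a) (u a) := by
  refine Primrec.option_bind (prim_tenc.comp ht) ?_
  refine Primrec.option_bind (prim_tenc.comp (hu.comp Primrec.fst)) ?_
  have x := (Primrec.fst (α := α) (β := ℕ × List ℕ)).comp (Primrec.fst (β := ℕ × List ℕ))
  have p := (Primrec.snd (α := α) (β := ℕ × List ℕ)).comp (Primrec.fst (β := ℕ × List ℕ))
  have q := Primrec.snd (α := α × (ℕ × List ℕ)) (β := ℕ × List ℕ)
  have n' := hn.comp x
  have el {f : (α × ℕ × List ℕ) × ℕ × List ℕ → ℕ × List ℕ} (hf : Primrec f) :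
      Primrec fun z => 2 * Nat.pair (n z.1.1) (Encodable.encode (f z).2) :=
    Primrec.nat_mul.comp (Primrec.const 2) (Primrec₂.natPair.comp n'
      (Primrec.encode.comp (Primrec.snd.comp hf)))
  refine Primrec.ite (PrimrecPred.and (Primrec.nat_le.comp (Primrec.fst.comp p) n')
    (Primrec.nat_le.comp (Primrec.fst.comp q) n')) ?_ (Primrec.const none)
  exact Primrec.option_some.comp (n'.pair (Primrec.list_append.comp (hp.comp x)
    (Primrec.list_cons.comp (el p) (Primrec.list_cons.comp (el q) (Primrec.const [])))))

theorem prim_fenc : Primrec fenc := by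
  have odd {α : Type} [Primcodable α] {f : α → ℕ} (hf : Primrec f) : Primrec fun a => 2 * f a + 1 :=
    Primrec.succ.comp (Primrec.nat_mul.comp (Primrec.const 2) hf)
  apply prim_frec
  · refine Primrec.option_some.comp (Primrec.id.pair ?_)
    refine Primrec.list_cons.comp ?_ (Primrec.const [])
    exact odd (odd (Primrec.succ.comp Primrec.succ))
  · exact prim_aenc (Primrec.const []) Primrec.fst (Primrec.fst.comp Primrec.snd) (Primrec.snd.comp Primrec.snd)
  · exact prim_aenc (Primrec.list_cons.comp (Primrec.const 1) (Primrec.list_cons.comp (odd (odd Primrec.fst)) (Primrec.const []))) Primrec.fst (Primrec.fst.comp Primrec.snd) (Primrec.snd.comp Primrec.snd)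
  · refine Primrec.option_bind (Primrec.fst.comp Primrec.snd) ?_
    refine Primrec.option_bind (Primrec.snd.comp (Primrec.snd.comp Primrec.fst)) ?_
    have p := (Primrec.snd (α := (ℕ × ℕ) × Option (ℕ × List ℕ) × Option (ℕ × List ℕ)) (β := ℕ × List ℕ)).comp (Primrec.fst (β := ℕ × List ℕ))
    have q := Primrec.snd (α := ((ℕ × ℕ) × Option (ℕ × List ℕ) × Option (ℕ × List ℕ)) × ℕ × List ℕ) (β := ℕ × List ℕ)
    refine Primrec.ite (Primrec.eq.comp (Primrec.fst.comp p) (Primrec.fst.comp q)) ?_ (Primrec.const none)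
    exact Primrec.option_some.comp ((Primrec.fst.comp p).pair
      (Primrec.list_cons.comp (Primrec.const _) (Primrec.list_append.comp (Primrec.snd.comp p) (Primrec.snd.comp q))))
  · refine Primrec.option_bind Primrec.snd ?_
    have q := Primrec.snd (α := ℕ × Option (ℕ × List ℕ)) (β := ℕ × List ℕ)
    refine Primrec.ite (Primrec.eq.comp (Primrec.fst.comp q) (Primrec.const 0)) (Primrec.const none) ?_
    exact Primrec.option_some.comp ((Primrec.pred.comp (Primrec.fst.comp q)).pair
      (Primrec.list_cons.comp (Primrec.const _) (Primrec.snd.comp q)))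

def fls {n : ℕ} (φ : L.BoundedFormula Empty n) : List ℕ := φ.listEncode.map Encodable.encode

theorem encode_term {n : ℕ} (t : L.Term (Empty ⊕ Fin n)) :
    Encodable.encode t = Encodable.encode (tls t) := by
  rw [tls, ← encode_list_map]; rfl

theorem aenc_tcd {n : ℕ} (pre : List ℕ) (t u : L.Term (Empty ⊕ Fin n)) :
    aenc pre n (tcd t) (tcd u) = some (n, pre ++ [2 * Nat.pair n (Encodable.encode t),
      2 * Nat.pair n (Encodable.encode u)]) := by
  obtain ⟨b, hb, h1⟩ := tenc_tcd t
  obtain ⟨b', hb', h2⟩ := tenc_tcd u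
  rw [aenc, h1, h2]
  simp [hb, hb', encode_term]

theorem fenc_cd {n : ℕ} (φ : L.BoundedFormula Empty n) : fenc (cd φ) = some (n, fls φ) := by
  induction φ using form_ind with
  | hf n => rw [cd, fenc, frec_F]; rfl
  | he n t u => rw [cd, fenc, frec_E, aenc_tcd]; rfl
  | hl n ts =>
    rw [fenc]
    refine (frec_L ..).trans ?_
    rw [aenc_tcd]
    simp [fls, BoundedFormula.listEncode, List.finRange_succ]
    exact rfl
  | hi n φ ψ h1 h2 =>
    rw [cd, fenc, frec_I, ← fenc, h1, h2]
    simp [fls, BoundedFormula.listEncode]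
  | ha n φ h =>
    rw [cd, fenc, frec_A, ← fenc, h]
    simp [fls, BoundedFormula.listEncode]

theorem aenc_conv {pre : List ℕ} {n t u m : ℕ} {l : List ℕ} (h : aenc pre n t u = some (m, l)) :
    m = n ∧ ∃ t' u' : L.Term (Empty ⊕ Fin n), tcd t' = t ∧ tcd u' = u := by
  simp only [aenc, Option.bind_eq_some_iff] at h
  obtain ⟨⟨b, l1⟩, h1, ⟨b', l2⟩, h2, h⟩ := h
  split_ifs at h with hb
  simp at h
  obtain ⟨t', ht⟩ := tenc_conv _ _ _ h1 n hb.1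
  obtain ⟨u', hu⟩ := tenc_conv _ _ _ h2 n hb.2
  exact ⟨h.1.symm, t', u', ht, hu⟩

theorem fenc_conv (c : ℕ) : ∀ n l, fenc c = some (n, l) →
    ∃ φ : L.BoundedFormula Empty n, cd φ = c := by
  induction c using fcode_ind with
  | h0 k =>
    intro n l h
    rw [fenc, frec_F] at h
    simp at h
    obtain ⟨rfl, -⟩ := h
    exact ⟨.falsum, rfl⟩
  | hE n t u =>
    intro m l h
    rw [fenc, frec_E] at h
    obtain ⟨rfl, t', u', rfl, rfl⟩ := aenc_conv h
    exact ⟨.equal t' u', rfl⟩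
  | hL n t u =>
    intro m l h
    rw [fenc, frec_L] at h
    obtain ⟨rfl, t', u', rfl, rfl⟩ := aenc_conv h
    exact ⟨.rel rlL ![t', u'], rfl⟩
  | hI a b h1 h2 =>
    intro m l h
    rw [fenc, frec_I, ← fenc] at h
    simp only [Option.bind_eq_some_iff] at h
    obtain ⟨⟨b, l1⟩, e1, ⟨b', l2⟩, e2, h⟩ := h
    split_ifs at h with hb
    simp at h hb
    obtain ⟨rfl, -⟩ := h
    subst hb
    obtain ⟨φ, rfl⟩ := h1 _ _ e1
    obtain ⟨ψ, rfl⟩ := h2 _ _ e2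
    exact ⟨.imp φ ψ, rfl⟩
  | hA a ih =>
    intro m l h
    rw [fenc, frec_A, ← fenc] at h
    simp only [Option.bind_eq_some_iff] at h
    obtain ⟨⟨b, l1⟩, e1, h⟩ := h
    split_ifs at h with hb
    simp at h hb
    obtain ⟨k, rfl⟩ := Nat.exists_eq_succ_of_ne_zero hb
    simp at h
    obtain ⟨rfl, -⟩ := h
    obtain ⟨φ, rfl⟩ := ih _ _ e1
    exact ⟨.all φ, rfl⟩

theorem gnum_eq (φ : Sent) : gnum φ = Encodable.encode (fls φ) := by
  rw [gnum, encode_list_map, fls]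

theorem gnum_inj {φ ψ : Sent} (h : gnum φ = gnum ψ) : φ = ψ := by
  have h1 := Encodable.encode_injective h
  have := BoundedFormula.listEncode_sigma_injective (L := L) (α := Empty) (a₁ := ⟨0, φ⟩) (a₂ := ⟨0, ψ⟩) h1
  simpa using this

/-- Gödel number of a raw code (0 if not a sentence). -/
def gn (c : ℕ) : ℕ := ((fenc c).map fun p => Encodable.encode p.2).getD 0

/-- raw sentence-code check -/
def isS (c : ℕ) : Bool := decide ((fenc c).map Prod.fst = some 0)

theorem prim_gn : Primrec gn := by
  refine Primrec.option_getD.comp (Primrec.option_map prim_fenc ?_) (Primrec.const 0)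
  exact Primrec.encode.comp (Primrec.snd.comp Primrec.snd)

theorem prim_isS : Primrec isS := by
  have h : Primrec fun c => (fenc c).map Prod.fst :=
    Primrec.option_map prim_fenc (Primrec.fst.comp Primrec.snd)
  exact (Primrec.eq.comp h (Primrec.const _)).decide

theorem gn_cd (φ : Sent) : gn (cd φ) = gnum φ := by
  rw [gn, fenc_cd, gnum_eq]; rfl

theorem isS_cd (φ : Sent) : isS (cd φ) = true := by
  rw [isS, fenc_cd]; simp

theorem isS_conv {c : ℕ} (h : isS c = true) : ∃ φ : Sent, cd φ = c := by
  simp [isS] at h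
  obtain ⟨l, h⟩ := h
  exact fenc_conv _ _ _ h

theorem cd_inj {φ ψ : Sent} (h : cd φ = cd ψ) : φ = ψ := by
  apply gnum_inj; rw [← gn_cd, h, gn_cd]

def isB : ℕ → Bool :=
  frec (fun _ => false) (fun _ _ _ => false)
    (fun n t u => decide (n ≠ 0 ∧ t = tV (n - 1)) &&
      ((tenc u).map fun p => decide (p.1 ≤ n - 1)).getD false)
    (fun _ _ _ _ => false) (fun _ _ => false)

def pcheck : ℕ → Bool × Bool × Bool :=
  frec (fun _ => (true, false, true)) (fun _ _ _ => (true, false, true))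
    (fun _ _ _ => (true, false, true))
    (fun a _ x y => (x.1 && y.1, isB a && y.1, x.1 && y.1))
    (fun _ x => (x.2.1, false, x.2.1 || x.2.2))

theorem prim_isB : Primrec isB := by
  apply prim_frec
  · exact Primrec.const _
  · exact Primrec.const _
  · have n : Primrec fun p : ℕ × ℕ × ℕ => p.1 := Primrec.fst
    have t : Primrec fun p : ℕ × ℕ × ℕ => p.2.1 := Primrec.fst.comp Primrec.snd
    have u : Primrec fun p : ℕ × ℕ × ℕ => p.2.2 := Primrec.snd.comp Primrec.snd
    have hV : Primrec tV := Primrec.succ.comp (Primrec.nat_mul.comp (Primrec.const 5) Primrec.id)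
    refine Primrec.and.comp ?_ ?_
    · exact (PrimrecPred.and ((Primrec.eq.comp n (Primrec.const 0)).not)
        (Primrec.eq.comp t (hV.comp (Primrec.pred.comp n)))).decide
    · refine Primrec.option_getD.comp (Primrec.option_map (prim_tenc.comp u) ?_) (Primrec.const _)
      exact (Primrec.nat_le.comp (Primrec.fst.comp Primrec.snd)
        (Primrec.pred.comp (n.comp Primrec.fst))).decide
  · exact Primrec.const _
  · exact Primrec.const _

theorem prim_pcheck : Primrec pcheck := by
  apply prim_frec
  · exact Primrec.const _
  · exact Primrec.const _
  · exact Primrec.const _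
  · have a : Primrec fun p : (ℕ × ℕ) × (Bool × Bool × Bool) × Bool × Bool × Bool => p.1.1 :=
      Primrec.fst.comp Primrec.fst
    have x : Primrec fun p : (ℕ × ℕ) × (Bool × Bool × Bool) × Bool × Bool × Bool => p.2.1.1 :=
      Primrec.fst.comp (Primrec.fst.comp Primrec.snd)
    have y : Primrec fun p : (ℕ × ℕ) × (Bool × Bool × Bool) × Bool × Bool × Bool => p.2.2.1 :=
      Primrec.fst.comp (Primrec.snd.comp Primrec.snd)
    exact (Primrec.and.comp x y).pair ((Primrec.and.comp (prim_isB.comp a) y).pair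
      (Primrec.and.comp x y))
  · have x : Primrec fun p : ℕ × (Bool × Bool × Bool) => p.2.2.1 :=
      Primrec.fst.comp (Primrec.snd.comp Primrec.snd)
    have y : Primrec fun p : ℕ × (Bool × Bool × Bool) => p.2.2.2 :=
      Primrec.snd.comp (Primrec.snd.comp Primrec.snd)
    exact x.pair ((Primrec.const _).pair (Primrec.or.comp x y))

theorem tcd_inj {n : ℕ} {t u : L.Term (Empty ⊕ Fin n)} (h : tcd t = tcd u) : t = u := by
  obtain ⟨b, _, h1⟩ := tenc_tcd t
  obtain ⟨b', _, h2⟩ := tenc_tcd u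
  rw [h, h2] at h1
  simp only [Option.some.injEq, Prod.mk.injEq] at h1
  exact Term.listEncode_injective
    ((List.map_injective_iff.2 Encodable.encode_injective h1.2).symm)

theorem tcd_relabel {n m : ℕ} (ρ : Fin n → Fin m) (hρ : ∀ i, (ρ i).1 = i.1)
    (t : L.Term (Empty ⊕ Fin n)) : tcd (t.relabel (Sum.map id ρ)) = tcd t := by
  induction t using term_ind with
  | hv i => simp [tcd, Term.relabel, hρ]
  | hz ts => rfl
  | hs ts h => exact congrArg tS h
  | ha ts h1 h2 => exact congrArg₂ tA h1 h2
  | hm ts h1 h2 => exact congrArg₂ tM h1 h2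

theorem leF_eq {n : ℕ} (t u : L.Term (Empty ⊕ Fin n)) : leF t u = .rel rlL ![t, u] := rfl

theorem isB_conv {k : ℕ} (φ : L.BoundedFormula Empty (k + 1)) (h : isB (cd φ) = true) :
    ∃ t : L.Term (Empty ⊕ Fin k), φ = leF (Term.var (Sum.inr (Fin.last k)))
        (t.relabel (Sum.map id Fin.castSucc)) := by
  rcases φ with _ | ⟨t, u⟩ | ⟨R, ts⟩ | ⟨φ, ψ⟩ | φ
  · rw [cd, isB, frec_F] at h; simp at h
  · rw [cd, isB, frec_E] at h; simp at h
  · rename_i l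
    change Rel l at R
    cases R
    rw [isB] at h
    have h := (frec_L ..).symm.trans h
    simp only [Bool.and_eq_true, decide_eq_true_eq] at h
    obtain ⟨⟨-, h1⟩, h2⟩ := h
    obtain ⟨b, _, h3⟩ := tenc_tcd (ts 1)
    rw [h3] at h2
    simp at h2
    obtain ⟨t, ht⟩ := tenc_conv _ _ _ h3 k h2
    refine ⟨t, ?_⟩
    have e1 : ts 1 = t.relabel (Sum.map id Fin.castSucc) := by
      apply tcd_inj
      rw [tcd_relabel Fin.castSucc (fun i => rfl), ht]
    have e0 : ts 0 = Term.var (Sum.inr (Fin.last k)) := by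
      apply tcd_inj
      exact h1
    rw [leF_eq]
    change BoundedFormula.rel rlL ts = BoundedFormula.rel rlL _
    congr 1
    ext i
    fin_cases i
    · exact e0
    · exact e1
  · rw [cd, isB, frec_I] at h; simp at h
  · rw [cd, isB, frec_A] at h; simp at h

theorem pcheck_conv {n : ℕ} (φ : L.BoundedFormula Empty n) :
    ((pcheck (cd φ)).1 = true → IsDelta0 φ) ∧
    ((pcheck (cd φ)).2.1 = true → ∀ k (h : n = k + 1), IsDelta0 (h ▸ φ : L.BoundedFormula Empty (k + 1)).all) := by
  induction φ using form_ind with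
  | hf n =>
    rw [cd, pcheck, frec_F]
    exact ⟨fun _ => .falsum, fun h => by simp at h⟩
  | he n t u =>
    rw [cd, pcheck, frec_E]
    exact ⟨fun _ => .equal t u, fun h => by simp at h⟩
  | hl n ts =>
    have e : pcheck (cd (.rel rlL ts)) = (true, false, true) := frec_L ..
    rw [e]
    refine ⟨fun _ => ?_, fun h => by simp at h⟩
    have := IsDelta0.le (ts 0) (ts 1)
    rw [leF_eq] at this
    convert this using 1
    congr 1
    ext i; fin_cases i <;> rfl
  | hi n φ ψ h1 h2 =>
    rw [cd, pcheck, frec_I, ← pcheck]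
    simp only [Bool.and_eq_true]
    refine ⟨fun h => (h1.1 h.1).imp (h2.1 h.2), ?_⟩
    rintro ⟨hb, hd⟩ k rfl
    obtain ⟨t, rfl⟩ := isB_conv _ hb
    exact IsDelta0.ball t (h2.1 hd)
  | ha n φ h =>
    rw [cd, pcheck, frec_A, ← pcheck]
    refine ⟨fun h' => h.2 h' n rfl, fun h => by simp at h⟩

theorem pcheck_pi {n : ℕ} (φ : L.BoundedFormula Empty n) : (pcheck (cd φ)).2.2 = true →
    ∃ (m : ℕ) (θ : L.BoundedFormula Empty m), IsDelta0 θ ∧ φ.alls = θ.alls := by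
  have aux {n : ℕ} (φ : L.BoundedFormula Empty n) (h : (pcheck (cd φ)).1 = true) :
    ∃ (m : ℕ) (θ : L.BoundedFormula Empty m), IsDelta0 θ ∧ φ.alls = θ.alls :=
    ⟨n, φ, (pcheck_conv φ).1 h, rfl⟩
  induction φ using form_ind with
  | hf n => intro h; apply aux; rw [cd, pcheck, frec_F]
  | he n t u => intro h; apply aux; rw [cd, pcheck, frec_E]
  | hl n ts => intro h; apply aux; rw [pcheck]; exact congrArg Prod.fst (frec_L ..)
  | hi n φ ψ h1 h2 =>
    intro h; apply aux; rw [cd, pcheck, frec_I, ← pcheck] at h ⊢; exact h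
  | ha n φ ih =>
    intro h
    rw [cd, pcheck, frec_A, ← pcheck] at h
    simp only [Bool.or_eq_true] at h
    rcases h with h | h
    · apply aux; rw [cd, pcheck, frec_A, ← pcheck]; exact h
    · exact ih h

def isP (c : ℕ) : Bool := isS c && (pcheck c).2.2

theorem prim_isP : Primrec isP :=
  Primrec.and.comp prim_isS (Primrec.snd.comp (Primrec.snd.comp prim_pcheck))

theorem isP_conv {c : ℕ} (h : isP c = true) : ∃ φ : Sent, cd φ = c ∧ IsPi1 φ := by
  simp only [isP, Bool.and_eq_true] at h
  obtain ⟨φ, rfl⟩ := isS_conv h.1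
  obtain ⟨m, θ, h1, h2⟩ := pcheck_pi (n := 0) φ h.2
  exact ⟨φ, rfl, m, θ, h1, h2⟩

theorem realize_leF {M : Type} [L.Structure M] {n : ℕ} (t u : L.Term (Empty ⊕ Fin n)) (v : Empty → M) (xs : Fin n → M) :
    (leF t u).Realize v xs ↔ vle (t.realize (Sum.elim v xs)) (u.realize (Sum.elim v xs)) := by
  exact BoundedFormula.realize_rel₂

theorem tcd_relabel_isB {n : ℕ} (t : L.Term (Empty ⊕ Fin n)) :
    isB (cd (leF (Term.var (Sum.inr (Fin.last n))) (t.relabel (Sum.map id Fin.castSucc)))) = true := by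
  obtain ⟨b, hb, h⟩ := tenc_tcd t
  rw [isB]
  refine (frec_L ..).trans ?_
  have := tcd_relabel Fin.castSucc (fun i => rfl) t
  change (decide (n + 1 ≠ 0 ∧ tV n = tV (n + 1 - 1)) &&
      (Option.map (fun p => decide (p.1 ≤ n + 1 - 1))
        (tenc (tcd (t.relabel (Sum.map id Fin.castSucc))))).getD false) = true
  rw [this, h]
  simp [hb]

theorem strictify {n : ℕ} {θ : L.BoundedFormula Empty n} (h : IsDelta0 θ) :
    ∀ {N : ℕ} (ρ : Fin n → Fin N), ∃ θ' : L.BoundedFormula Empty N, (pcheck (cd θ')).1 = true ∧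
      ∀ (M : Type) [L.Structure M] (v : Empty → M) (xs : Fin N → M),
        θ'.Realize v xs ↔ θ.Realize v (xs ∘ ρ) := by
  have tr {n N : ℕ} (ρ : Fin n → Fin N) (t : L.Term (Empty ⊕ Fin n)) (M : Type) [L.Structure M]
      (v : Empty → M) (xs : Fin N → M) : (t.relabel (Sum.map id ρ)).realize (Sum.elim v xs) =
      t.realize (Sum.elim v (xs ∘ ρ)) := by
    rw [Term.realize_relabel, Sum.elim_comp_map]; rfl
  have sn {n N : ℕ} (ρ : Fin n → Fin N) (M : Type) (xs : Fin N → M) (x : M) :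
      (Fin.snoc xs x : Fin (N + 1) → M) ∘ (Fin.snoc (Fin.castSucc ∘ ρ) (Fin.last N) : Fin (n + 1) → Fin (N + 1)) = Fin.snoc (xs ∘ ρ) x := by
    ext i
    refine Fin.lastCases ?_ (fun i => ?_) i <;> simp
  have cs {N : ℕ} (M : Type) (xs : Fin N → M) (x : M) :
      (Fin.snoc xs x : Fin (N + 1) → M) ∘ Fin.castSucc = xs := by
    ext i; simp
  induction h with
  | falsum => intro N ρ; exact ⟨.falsum, by rw [cd, pcheck, frec_F], fun M _ v xs => Iff.rfl⟩
  | equal t u =>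
    intro N ρ
    refine ⟨.equal (t.relabel (Sum.map id ρ)) (u.relabel (Sum.map id ρ)), by rw [cd, pcheck, frec_E], fun M _ v xs => ?_⟩
    refine BoundedFormula.realize_bdEqual _ _ |>.trans ?_
    rw [tr, tr, BoundedFormula.realize_bdEqual]
  | le t u =>
    intro N ρ
    refine ⟨leF (t.relabel (Sum.map id ρ)) (u.relabel (Sum.map id ρ)), congrArg Prod.fst (frec_L ..), fun M _ v xs => ?_⟩
    rw [realize_leF, realize_leF, tr, tr]
  | imp _ _ h1 h2 =>
    intro N ρ
    obtain ⟨a, ha, ha'⟩ := h1 ρ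
    obtain ⟨b, hb, hb'⟩ := h2 ρ
    refine ⟨a.imp b, by rw [cd, pcheck, frec_I, ← pcheck]; simp [ha, hb], fun M _ v xs => ?_⟩
    rw [BoundedFormula.realize_imp, ha', hb', BoundedFormula.realize_imp]
  | ball t _ h =>
    intro N ρ
    obtain ⟨a, ha, ha'⟩ := h (Fin.snoc (Fin.castSucc ∘ ρ) (Fin.last N))
    refine ⟨((leF (Term.var (Sum.inr (Fin.last N)))
        ((t.relabel (Sum.map id ρ)).relabel (Sum.map id Fin.castSucc))).imp a).all, ?_, fun M _ v xs => ?_⟩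
    · rw [cd, cd, pcheck, frec_A, frec_I, ← pcheck]
      simp only [ha, tcd_relabel_isB, Bool.and_self]
    · rw [BoundedFormula.realize_all, BoundedFormula.realize_all]
      refine forall_congr' fun x => ?_
      rw [BoundedFormula.realize_imp, BoundedFormula.realize_imp, ha', realize_leF, realize_leF, tr, tr, tr, sn, cs, cs]
      simp
  | bex t _ h =>
    intro N ρ
    obtain ⟨a, ha, ha'⟩ := h (Fin.snoc (Fin.castSucc ∘ ρ) (Fin.last N))
    refine ⟨(((leF (Term.var (Sum.inr (Fin.last N)))
        ((t.relabel (Sum.map id ρ)).relabel (Sum.map id Fin.castSucc))).imp (a.imp .falsum)).all).imp .falsum, ?_, fun M _ v xs => ?_⟩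
    · rw [cd, cd, cd, cd, cd, cd, pcheck, frec_I, frec_A, frec_I, frec_I, frec_F, frec_F, ← pcheck]
      simp only [ha, tcd_relabel_isB, Bool.and_self]
    · rw [BoundedFormula.realize_ex, BoundedFormula.realize_imp, BoundedFormula.realize_all]
      change ¬ _ ↔ _
      rw [not_forall]
      refine exists_congr fun x => ?_
      rw [BoundedFormula.realize_imp, BoundedFormula.realize_imp, BoundedFormula.realize_inf, ha', realize_leF, realize_leF, tr, tr, tr, sn, cs, cs]
      change ¬ (_ → _ → False) ↔ _
      simp

theorem isP_alls {n : ℕ} (θ : L.BoundedFormula Empty n) (h : (pcheck (cd θ)).1 = true) :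
    isP (cd (θ.alls : Sent)) = true := by
  have h0 : (pcheck (cd θ)).2.2 = true := by
    rcases fcases (cd θ) with ⟨k, e⟩ | ⟨n, t, u, e⟩ | ⟨n, t, u, e⟩ | ⟨t, u, e⟩ | ⟨a, e⟩
    · rw [e, pcheck, frec_F]
    · rw [e, pcheck, frec_E]
    · rw [e, pcheck, frec_L]
    · rw [e, pcheck, frec_I, ← pcheck] at h ⊢; exact h
    · rw [e, pcheck, frec_A, ← pcheck] at h ⊢; simp at h ⊢; exact Or.inl h
  rw [isP, isS_cd, Bool.true_and]
  clear h
  induction n with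
  | zero => exact h0
  | succ n ih =>
    apply ih θ.all
    rw [cd, pcheck, frec_A, ← pcheck]; simp [h0]

theorem alls_lt {n : ℕ} (θ θ' : L.BoundedFormula Empty n) (h : cd θ < cd θ') :
    cd (θ.alls : Sent) < cd (θ'.alls : Sent) := by
  induction n with
  | zero => exact h
  | succ n ih => exact ih θ.all θ'.all (by rw [cd, cd, fA, fA]; omega)

theorem realize_alls_sent {M : Type} [L.Structure M] {n : ℕ} (θ : L.BoundedFormula Empty n) :
    M ⊨ (θ.alls : Sent) ↔ ∀ xs : Fin n → M, θ.Realize default xs := by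
  rw [Sentence.Realize, BoundedFormula.realize_alls]

/-- Every Π₁ sentence has an equivalent strict one. -/
theorem pi_strict {φ : Sent} (h : IsPi1 φ) : ∃ (n : ℕ) (θ : L.BoundedFormula Empty n),
    (pcheck (cd θ)).1 = true ∧ ∀ (M : Type) [L.Structure M], M ⊨ (θ.alls : Sent) ↔ M ⊨ φ := by
  obtain ⟨n, θ, h, rfl⟩ := h
  obtain ⟨θ', h1, h2⟩ := strictify h id
  refine ⟨n, θ', h1, fun M _ => ?_⟩
  rw [realize_alls_sent, realize_alls_sent]
  exact forall_congr' fun xs => h2 M _ xs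

theorem pi_conj {φ ψ : Sent} (h1 : IsPi1 φ) (h2 : IsPi1 ψ) : ∃ χ : Sent, isP (cd χ) = true ∧
    ∀ (M : Type) [L.Structure M], M ⊨ χ ↔ M ⊨ φ ∧ M ⊨ ψ := by
  obtain ⟨n, θ, h1, rfl⟩ := h1
  obtain ⟨m, η, h2, rfl⟩ := h2
  obtain ⟨θ', a1, a2⟩ := strictify h1 (Fin.castAdd m)
  obtain ⟨η', b1, b2⟩ := strictify h2 (Fin.natAdd n)
  refine ⟨((θ'.imp (η'.imp .falsum)).imp .falsum).alls, isP_alls _ ?_, fun M _ => ?_⟩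
  · rw [cd, cd, cd, cd, cd, pcheck, frec_I, frec_I, frec_I, frec_F, ← pcheck]
    simp only [a1, b1, Bool.and_self]
  · rw [realize_alls_sent, realize_alls_sent, realize_alls_sent]
    have e : ∀ xs : Fin (n + m) → M, ((θ'.imp (η'.imp .falsum)).imp .falsum).Realize default xs ↔
        θ.Realize default (xs ∘ Fin.castAdd m) ∧ η.Realize default (xs ∘ Fin.natAdd n) := by
      intro xs
      rw [← a2, ← b2]
      change ((_ → _ → False) → False) ↔ _
      tauto
    simp only [e]
    constructor
    · intro h
      refine ⟨fun xs => ?_, fun xs => ?_⟩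
      · have := (h (Fin.append xs (fun _ => vz M))).1
        convert this; ext i; simp
      · have := (h (Fin.append (fun _ => vz M) xs)).2
        convert this; ext i; simp
    · intro h xs
      exact ⟨h.1 _, h.2 _⟩

theorem pi_alt {c : ℕ} (hc : isP c = true) : ∃ χ : Sent, isP (cd χ) = true ∧ cd χ ≠ c ∧
    ∀ (M : Type) [L.Structure M], M ⊨ χ ↔ sem (M := M) c [] := by
  obtain ⟨φ, rfl, h⟩ := isP_conv hc
  obtain ⟨n, θ, h1, h2⟩ := pi_strict h
  have h3 : ∀ (M : Type) [L.Structure M], M ⊨ (((BoundedFormula.falsum.imp .falsum).imp θ).alls : Sent) ↔ M ⊨ φ := by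
    intro M _
    rw [← h2, realize_alls_sent, realize_alls_sent]
    refine forall_congr' fun xs => ?_
    change ((False → False) → _) ↔ _
    simp
  by_cases e : cd (θ.alls : Sent) = cd φ
  · refine ⟨((BoundedFormula.falsum.imp .falsum).imp θ).alls, isP_alls _ ?_, ?_, fun M _ => (h3 M).trans (sem_sent φ).symm⟩
    · rw [cd, cd, cd, pcheck, frec_I, frec_I, frec_F, ← pcheck]
      simp only [h1, Bool.and_self]
    · rw [← e]
      apply ne_of_gt
      apply alls_lt
      rw [cd, fI]
      have := Nat.right_le_pair (cd ((BoundedFormula.falsum (L := L) (α := Empty) (n := n)).imp .falsum)) (cd θ)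
      omega
  · exact ⟨θ.alls, isP_alls _ h1, e, fun M _ => (h2 M).trans (sem_sent φ).symm⟩

/-- limit computable functions -/
def LC {α σ : Type} [Primcodable α] [Primcodable σ] (f : α → σ) : Prop :=
  ∃ F : ℕ → α → σ, Computable₂ F ∧ ∀ a, ∃ N, ∀ m ≥ N, F m a = f a

section
variable {α β γ σ : Type} [Primcodable α] [Primcodable β] [Primcodable γ] [Primcodable σ]

theorem LC.of_comp {f : α → σ} (h : Computable f) : LC f :=
  ⟨fun _ a => f a, h.comp Computable.snd, fun _ => ⟨0, fun _ _ => rfl⟩⟩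

theorem LC.of_prim {f : α → σ} (h : Primrec f) : LC f := LC.of_comp h.to_comp

theorem LC.comp {f : β → σ} {g : α → β} (hf : LC f) (hg : LC g) : LC fun a => f (g a) := by
  obtain ⟨F, cF, hF⟩ := hf
  obtain ⟨G, cG, hG⟩ := hg
  refine ⟨fun m a => F m (G m a), cF.comp Computable.fst cG, fun a => ?_⟩
  obtain ⟨N, hN⟩ := hG a
  obtain ⟨K, hK⟩ := hF (g a)
  refine ⟨max N K, fun m hm => ?_⟩
  beta_reduce
  rw [hN m (le_trans (le_max_left _ _) hm), hK m (le_trans (le_max_right _ _) hm)]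

theorem LC.pair {f : α → β} {g : α → γ} (hf : LC f) (hg : LC g) : LC fun a => (f a, g a) := by
  obtain ⟨F, cF, hF⟩ := hf
  obtain ⟨G, cG, hG⟩ := hg
  refine ⟨fun m a => (F m a, G m a), Computable.pair cF cG, fun a => ?_⟩
  obtain ⟨N, hN⟩ := hG a
  obtain ⟨K, hK⟩ := hF a
  refine ⟨max N K, fun m hm => ?_⟩
  beta_reduce
  rw [hN m (le_trans (le_max_left _ _) hm), hK m (le_trans (le_max_right _ _) hm)]

theorem LC.comp₂ {f : β → γ → σ} {g : α → β} {h : α → γ} (hf : Primrec₂ f) (hg : LC g) (hh : LC h) :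
    LC fun a => f (g a) (h a) :=
  (LC.of_comp (f := fun p : β × γ => f p.1 p.2) hf.to_comp).comp (hg.pair hh)

theorem LC.cond {c : α → Bool} {f g : α → σ} (hc : LC c) (hf : LC f) (hg : LC g) :
    LC fun a => bif c a then f a else g a := by
  have : LC (fun p : Bool × σ × σ => bif p.1 then p.2.1 else p.2.2) :=
    LC.of_comp (Computable.cond Computable.fst (Computable.fst.comp Computable.snd)
      (Computable.snd.comp Computable.snd))
  exact this.comp (hc.pair (hf.pair hg))

theorem LC.and {f g : α → Bool} (hf : LC f) (hg : LC g) : LC fun a => f a && g a :=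
  LC.comp₂ Primrec.and hf hg
theorem LC.or {f g : α → Bool} (hf : LC f) (hg : LC g) : LC fun a => f a || g a :=
  LC.comp₂ Primrec.or hf hg
theorem LC.not {f : α → Bool} (hf : LC f) : LC fun a => !f a :=
  (LC.of_prim Primrec.not).comp hf

theorem LC.nat_rec {f : α → σ} {h : α × ℕ × σ → σ} {n : α → ℕ} (hf : LC f) (hh : LC h) (hn : LC n) :
    LC fun a => (Nat.rec (f a) (fun k ih => h (a, k, ih)) (n a) : σ) := by
  have key : LC fun p : α × ℕ => (Nat.rec (f p.1) (fun k ih => h (p.1, k, ih)) p.2 : σ) := by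
    obtain ⟨F, cF, hF⟩ := hf
    obtain ⟨H, cH, hH⟩ := hh
    refine ⟨fun m p => Nat.rec (F m p.1) (fun k ih => H m (p.1, k, ih)) p.2, ?_, ?_⟩
    · refine Computable.nat_rec (f := fun q : ℕ × α × ℕ => q.2.2) (g := fun q : ℕ × α × ℕ => F q.1 q.2.1)
        (h := fun q r => H q.1 (q.2.1, r.1, r.2)) ?_ ?_ ?_
      · exact Computable.snd.comp Computable.snd
      · exact cF.comp Computable.fst (Computable.fst.comp Computable.snd)
      · exact cH.comp (Computable.fst.comp Computable.fst)
          (Computable.pair (Computable.fst.comp (Computable.snd.comp Computable.fst)) Computable.snd)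
    · rintro ⟨a, n⟩
      induction n with
      | zero => exact hF a
      | succ n ih =>
        obtain ⟨N, hN⟩ := ih
        obtain ⟨K, hK⟩ := hH (a, n, (Nat.rec (f a) (fun k ih => h (a, k, ih)) n : σ))
        refine ⟨max N K, fun m hm => ?_⟩
        have h1 := hN m (le_trans (le_max_left _ _) hm)
        have h2 := hK m (le_trans (le_max_right _ _) hm)
        simp only at h1 h2 ⊢
        rw [h1, h2]
  exact key.comp ((LC.of_comp Computable.id).pair hn)

theorem LC.find {p : α × ℕ → Bool} (hp : LC p) {f : α → ℕ} (h1 : ∀ a, p (a, f a) = true)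
    (h2 : ∀ a k, k < f a → p (a, k) = false) : LC f := by
  obtain ⟨P, cP, hP⟩ := hp
  refine ⟨fun m a => Nat.rec 0 (fun _ r => bif P m (a, r) then r else r + 1) m, ?_, ?_⟩
  · refine Computable.nat_rec (f := fun q : ℕ × α => q.1) (g := fun q : ℕ × α => 0)
      (h := fun q r => bif P q.1 (q.2, r.2) then r.2 else r.2 + 1) ?_ ?_ ?_
    · exact Computable.fst
    · exact Computable.const 0
    · have r : Computable fun z : (ℕ × α) × ℕ × ℕ => z.2.2 := Computable.snd.comp Computable.snd
      exact Computable.cond (cP.comp (Computable.fst.comp Computable.fst)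
        ((Computable.snd.comp Computable.fst).pair r)) r (Computable.succ.comp r)
  · intro a
    have hB : ∀ n, ∃ N, ∀ m ≥ N, ∀ k ≤ n, P m (a, k) = p (a, k) := by
      intro n
      induction n with
      | zero => obtain ⟨N, hN⟩ := hP (a, 0)
                exact ⟨N, fun m hm k hk => by obtain rfl : k = 0 := by omega
                                              exact hN m hm⟩
      | succ n ih =>
        obtain ⟨N, hN⟩ := ih
        obtain ⟨K, hK⟩ := hP (a, n + 1)
        refine ⟨max N K, fun m hm k hk => ?_⟩
        rcases Nat.lt_or_ge n k with h | h
        · obtain rfl : k = n + 1 := by omega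
          exact hK m (le_trans (le_max_right _ _) hm)
        · exact hN m (le_trans (le_max_left _ _) hm) k h
    obtain ⟨N, hN⟩ := hB (f a)
    refine ⟨max N (f a), fun m hm => ?_⟩
    have hN := hN m (le_trans (le_max_left _ _) hm)
    have hm' : f a ≤ m := le_trans (le_max_right _ _) hm
    have : ∀ k, (Nat.rec 0 (fun _ r => bif P m (a, r) then r else r + 1) k : ℕ) = min k (f a) := by
      intro k
      induction k with
      | zero => simp
      | succ k ih =>
        simp only [ih]
        rw [hN _ (min_le_right _ _)]
        rcases Nat.lt_or_ge k (f a) with h | h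
        · rw [min_eq_left h.le, h2 a k h, min_eq_left (by omega)]; rfl
        · rw [min_eq_right h, h1, min_eq_right (by omega)]; rfl
    exact (this m).trans (min_eq_right hm')

def allB (p : ℕ → Bool) (n : ℕ) : Bool := Nat.rec true (fun k ih => ih && p k) n

theorem allB_iff (p : ℕ → Bool) (n : ℕ) : allB p n = true ↔ ∀ k < n, p k = true := by
  induction n with
  | zero => simp [allB]
  | succ n ih =>
    have : allB p (n + 1) = (allB p n && p n) := rfl
    rw [this, Bool.and_eq_true, ih]
    constructor
    · rintro ⟨h1, h2⟩ k hk
      rcases Nat.lt_succ_iff_lt_or_eq.1 hk with h | rfl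
      · exact h1 k h
      · exact h2
    · exact fun h => ⟨fun k hk => h k (by omega), h n (by omega)⟩

theorem LC.allB {p : α → ℕ → Bool} (hp : LC fun q : α × ℕ => p q.1 q.2) {n : α → ℕ} (hn : LC n) :
    LC fun a => ArithFormalization.allB (p a) (n a) := by
  refine LC.nat_rec (f := fun _ => true) (h := fun q => q.2.2 && p q.1 q.2.1)
    (LC.of_comp (Computable.const _)) ?_ hn
  refine LC.and (LC.of_comp (Computable.snd.comp Computable.snd)) ?_
  exact hp.comp (LC.of_comp (Computable.fst.pair (Computable.fst.comp Computable.snd)))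

/-- a decreasing approximation -/
theorem LC.of_anti {D : ℕ → α → Bool} (hD : Computable₂ D)
    (hanti : ∀ a m n, m ≤ n → D n a = true → D m a = true) {f : α → Bool}
    (hf : ∀ a, f a = true ↔ ∀ m, D m a = true) : LC f := by
  refine ⟨D, hD, fun a => ?_⟩
  by_cases h : f a = true
  · exact ⟨0, fun m _ => by rw [h, (hf a).1 h m]⟩
  · obtain ⟨N, hN⟩ := not_forall.1 (fun h' => h ((hf a).2 h'))
    refine ⟨N, fun m hm => ?_⟩
    rw [Bool.not_eq_true] at h
    rw [h]
    by_contra h'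
    rw [Bool.not_eq_false] at h'
    exact hN (hanti a N m hm h')
end

abbrev Clause := List (ℕ × Bool)

def satc (V : ℕ → Bool) (c : Clause) : Prop := ∃ l ∈ c, V l.1 = l.2

def asg (m : ℕ) : List (List Bool) :=
  Nat.rec ([] :: []) (fun _ ih => ih.map (fun s => s ++ [true]) ++ ih.map (fun s => s ++ [false])) m

theorem prim_asg : Primrec asg := by
  refine Primrec.nat_rec' (f := fun m => m) (g := fun _ => (([] :: []) : List (List Bool)))
    (h := fun _ p => p.2.map (fun s => s ++ [true]) ++ p.2.map (fun s => s ++ [false]))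
    Primrec.id (Primrec.const _) ?_
  have p2 : Primrec fun z : ℕ × ℕ × List (List Bool) => z.2.2 := Primrec.snd.comp Primrec.snd
  refine Primrec.list_append.comp (Primrec.list_map p2 ?_) (Primrec.list_map p2 ?_)
  · exact Primrec.list_append.comp Primrec.snd (Primrec.const _)
  · exact Primrec.list_append.comp Primrec.snd (Primrec.const _)

theorem mem_asg (V : ℕ → Bool) (m : ℕ) : (List.range m).map V ∈ asg m := by
  induction m with
  | zero => simp [asg]
  | succ m ih =>
    have : asg (m + 1) = (asg m).map (fun s => s ++ [true]) ++ (asg m).map (fun s => s ++ [false]) := rfl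
    rw [this, List.range_succ, List.map_append]
    simp only [List.mem_append, List.mem_map, List.map_cons, List.map_nil]
    rcases h : V m
    · exact Or.inr ⟨_, ih, rfl⟩
    · exact Or.inl ⟨_, ih, rfl⟩

theorem length_asg (m : ℕ) : ∀ s ∈ asg m, s.length = m := by
  induction m with
  | zero => simp [asg]
  | succ m ih =>
    have : asg (m + 1) = (asg m).map (fun s => s ++ [true]) ++ (asg m).map (fun s => s ++ [false]) := rfl
    rw [this]
    simp only [List.mem_append, List.mem_map]
    rintro s (⟨s', h, rfl⟩ | ⟨s', h, rfl⟩) <;> simp [ih _ h]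

def litOK (s : List Bool) (l : ℕ × Bool) : Prop := s.getD l.1 false = l.2 ∨ s.length ≤ l.1

instance (s : List Bool) (l : ℕ × Bool) : Decidable (litOK s l) :=
  inferInstanceAs (Decidable (_ ∨ _))

def Dst (cs : List Clause) (m : ℕ) : Bool :=
  decide (∃ s ∈ asg m, ∀ c ∈ cs, ∃ l ∈ c, litOK s l)

theorem prim_Dst : Primrec₂ Dst := by
  have h1 : PrimrecRel fun (l : ℕ × Bool) (s : List Bool) => litOK s l := by
    have s : Primrec fun z : (ℕ × Bool) × List Bool => z.2 := Primrec.snd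
    have i : Primrec fun z : (ℕ × Bool) × List Bool => z.1.1 := Primrec.fst.comp Primrec.fst
    have b : Primrec fun z : (ℕ × Bool) × List Bool => z.1.2 := Primrec.snd.comp Primrec.fst
    exact PrimrecPred.or (Primrec.eq.comp ((Primrec.list_getD false).comp s i) b)
      (Primrec.nat_le.comp (Primrec.list_length.comp s) i)
  have h2 := h1.exists_mem_list
  have h3 := h2.forall_mem_list
  have h4 : PrimrecRel fun (s : List Bool) (cs : List Clause) => ∀ c ∈ cs, ∃ l ∈ c, litOK s l :=
    h3.comp Primrec.snd Primrec.fst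
  have h5 := h4.exists_mem_list
  exact (h5.comp (prim_asg.comp Primrec.snd) Primrec.fst).decide

theorem Dst_iff (cs : List Clause) (m : ℕ) : Dst cs m = true ↔
    ∃ V : ℕ → Bool, ∀ c ∈ cs, ∃ l ∈ c, V l.1 = l.2 ∨ m ≤ l.1 := by
  rw [Dst, decide_eq_true_eq]
  constructor
  · rintro ⟨s, hs, h⟩
    refine ⟨fun i => s.getD i false, fun c hc => ?_⟩
    obtain ⟨l, hl, h⟩ := h c hc
    rw [litOK, length_asg _ _ hs] at h
    exact ⟨l, hl, h⟩
  · rintro ⟨V, h⟩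
    refine ⟨_, mem_asg V m, fun c hc => ?_⟩
    obtain ⟨l, hl, h⟩ := h c hc
    refine ⟨l, hl, ?_⟩
    rw [litOK]
    rcases Nat.lt_or_ge l.1 m with h' | h'
    · left
      rcases h with h | h
      · rw [← h]; simp [List.getD, h']
      · omega
    · right; simpa using h'

theorem sat_compact (C : ℕ → List Clause) (hC : ∀ m n, m ≤ n → C m ⊆ C n) :
    (∃ V, ∀ m, ∀ c ∈ C m, satc V c) ↔ ∀ m, Dst (C m) m = true := by
  constructor
  · rintro ⟨V, hV⟩ m
    rw [Dst_iff]
    refine ⟨V, fun c hc => ?_⟩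
    obtain ⟨l, hl, h⟩ := hV m c hc
    exact ⟨l, hl, Or.inl h⟩
  · intro h
    let K : ℕ → Set (ℕ → Bool) := fun m => {V | ∀ c ∈ C m, ∃ l ∈ c, V l.1 = l.2 ∨ m ≤ l.1}
    have hcl : ∀ m, IsClosed (K m) := by
      intro m
      have : K m = ⋂ c ∈ C m, ⋃ l ∈ {l | l ∈ c}, {V : ℕ → Bool | V l.1 = l.2 ∨ m ≤ l.1} := by
        ext V; simp [K]
      rw [this]
      refine isClosed_iInter fun c => isClosed_iInter fun _ => ?_
      refine Set.Finite.isClosed_biUnion (List.finite_toSet c) fun l _ => ?_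
      by_cases hm : m ≤ l.1
      · simp [hm]
      · simp only [hm, or_false]
        exact isClosed_eq (continuous_apply _) continuous_const
    obtain ⟨V, hV⟩ := IsCompact.nonempty_iInter_of_sequence_nonempty_isCompact_isClosed K
      (by
        intro m V hV c hc
        obtain ⟨l, hl, h⟩ := hV c (hC m (m + 1) (by omega) hc)
        exact ⟨l, hl, h.imp id (by omega)⟩)
      (fun m => (Dst_iff _ _).1 (h m)) (hcl 0).isCompact hcl
    refine ⟨V, fun m c hc => ?_⟩
    rw [Set.mem_iInter] at hV
    obtain ⟨B, hB⟩ : ∃ B, ∀ l ∈ c, l.1 < B := by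
      refine ⟨(c.map Prod.fst).sum + 1, fun l hl => ?_⟩
      have := List.single_le_sum (l := c.map Prod.fst) (by simp) l.1 (List.mem_map_of_mem hl)
      omega
    obtain ⟨l, hl, h⟩ := hV (max m B) c (hC _ _ (le_max_left _ _) hc)
    refine ⟨l, hl, h.resolve_right ?_⟩
    have := hB l hl
    have := le_max_right m B
    omega

/-! ### the clauses -/

def dls (v : ℕ) : List ℕ := Denumerable.ofNat (List ℕ) v
def app (v d : ℕ) : ℕ := Encodable.encode (dls v ++ [d])
def look (v i : ℕ) : ℕ := (dls v).getD i 0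
def iF (c v : ℕ) : ℕ := 3 * Nat.pair c v
def iE (a b : ℕ) : ℕ := 3 * Nat.pair a b + 1
def iL (a b : ℕ) : ℕ := 3 * Nat.pair a b + 2
def Nt (t v : ℕ) : ℕ := 2 * Nat.pair t v
def Wt (a v : ℕ) : ℕ := 2 * Nat.pair a v + 1

def base (p : ℕ × ℕ × ℕ × ℕ × ℕ × ℕ) : List Clause :=
  [ [(iE p.1 p.1, true)],
   [(iE p.1 p.2.1, false), (iE p.1 p.2.2.1, false), (iE p.2.1 p.2.2.1, true)],
   [(iE (Nt (tV p.1) p.2.1) (look p.2.1 p.1), true)],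
   [(iE (Nt (5 * p.1) p.2.1) (Nt 0 0), true)],
   [(iE (Nt p.1 p.2.1) (Nt p.2.2.1 p.2.2.2.1), false), (iE (Nt (tS p.1) p.2.1) (Nt (tS p.2.2.1) p.2.2.2.1), true)],
   [(iE (Nt p.1 p.2.2.1) (Nt p.2.2.2.1 p.2.2.2.2.2), false), (iE (Nt p.2.1 p.2.2.1) (Nt p.2.2.2.2.1 p.2.2.2.2.2), false),
    (iE (Nt (tA p.1 p.2.1) p.2.2.1) (Nt (tA p.2.2.2.1 p.2.2.2.2.1) p.2.2.2.2.2), true)],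
   [(iE (Nt p.1 p.2.2.1) (Nt p.2.2.2.1 p.2.2.2.2.2), false), (iE (Nt p.2.1 p.2.2.1) (Nt p.2.2.2.2.1 p.2.2.2.2.2), false),
    (iE (Nt (tM p.1 p.2.1) p.2.2.1) (Nt (tM p.2.2.2.1 p.2.2.2.2.1) p.2.2.2.2.2), true)],
   [(iE p.1 p.2.1, false), (iE p.2.2.1 p.2.2.2.1, false), (iL p.1 p.2.2.1, false), (iL p.2.1 p.2.2.2.1, true)],
   [(iF (fF p.1) p.2.1, false)],
   [(iF (fE p.1 p.2.1 p.2.2.1) p.2.2.2.1, false), (iE (Nt p.2.1 p.2.2.2.1) (Nt p.2.2.1 p.2.2.2.1), true)],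
   [(iF (fE p.1 p.2.1 p.2.2.1) p.2.2.2.1, true), (iE (Nt p.2.1 p.2.2.2.1) (Nt p.2.2.1 p.2.2.2.1), false)],
   [(iF (fL p.1 p.2.1 p.2.2.1) p.2.2.2.1, false), (iL (Nt p.2.1 p.2.2.2.1) (Nt p.2.2.1 p.2.2.2.1), true)],
   [(iF (fL p.1 p.2.1 p.2.2.1) p.2.2.2.1, true), (iL (Nt p.2.1 p.2.2.2.1) (Nt p.2.2.1 p.2.2.2.1), false)],
   [(iF (fI p.1 p.2.1) p.2.2.1, false), (iF p.1 p.2.2.1, false), (iF p.2.1 p.2.2.1, true)],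
   [(iF p.1 p.2.2.1, true), (iF (fI p.1 p.2.1) p.2.2.1, true)],
   [(iF p.2.1 p.2.2.1, false), (iF (fI p.1 p.2.1) p.2.2.1, true)],
   [(iF (fA p.1) p.2.1, false), (iF p.1 (app p.2.1 p.2.2.1), true)],
   [(iF p.1 (app p.2.1 (Wt p.1 p.2.1)), false), (iF (fA p.1) p.2.1, true)] ]

set_option maxHeartbeats 1000000 in
theorem prim_base : Primrec base := by
  have a : Primrec fun p : ℕ × ℕ × ℕ × ℕ × ℕ × ℕ => p.1 := Primrec.fst
  have b : Primrec fun p : ℕ × ℕ × ℕ × ℕ × ℕ × ℕ => p.2.1 := Primrec.fst.comp Primrec.snd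
  have c : Primrec fun p : ℕ × ℕ × ℕ × ℕ × ℕ × ℕ => p.2.2.1 :=
    Primrec.fst.comp (Primrec.snd.comp Primrec.snd)
  have d : Primrec fun p : ℕ × ℕ × ℕ × ℕ × ℕ × ℕ => p.2.2.2.1 :=
    Primrec.fst.comp (Primrec.snd.comp (Primrec.snd.comp Primrec.snd))
  have e : Primrec fun p : ℕ × ℕ × ℕ × ℕ × ℕ × ℕ => p.2.2.2.2.1 :=
    Primrec.fst.comp (Primrec.snd.comp (Primrec.snd.comp (Primrec.snd.comp Primrec.snd)))
  have h : Primrec fun p : ℕ × ℕ × ℕ × ℕ × ℕ × ℕ => p.2.2.2.2.2 :=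
    Primrec.snd.comp (Primrec.snd.comp (Primrec.snd.comp (Primrec.snd.comp Primrec.snd)))
  have pr (k r : ℕ) : Primrec₂ fun x y : ℕ => k * Nat.pair x y + r :=
    Primrec.nat_add.comp (Primrec.nat_mul.comp (Primrec.const k) Primrec₂.natPair) (Primrec.const r)
  have li (k r : ℕ) : Primrec fun x : ℕ => k * x + r :=
    Primrec.nat_add.comp (Primrec.nat_mul.comp (Primrec.const k) Primrec.id) (Primrec.const r)
  have pF : Primrec₂ iF := pr 3 0
  have pE : Primrec₂ iE := pr 3 1
  have pL : Primrec₂ iL := pr 3 2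
  have pN : Primrec₂ Nt := pr 2 0
  have pW : Primrec₂ Wt := pr 2 1
  have ptA : Primrec₂ tA := pr 5 3
  have ptM : Primrec₂ tM := pr 5 4
  have pfI : Primrec₂ fI := pr 5 3
  have ptV : Primrec tV := li 5 1
  have ptS : Primrec tS := li 5 2
  have pfF : Primrec fF := li 5 0
  have pfA : Primrec fA := li 5 4
  have p5 : Primrec fun x : ℕ => 5 * x := li 5 0
  have pdls : Primrec dls := Primrec.ofNat _
  have papp : Primrec₂ app := Primrec.encode.comp (Primrec.list_append.comp (pdls.comp Primrec.fst)
    (Primrec.list_cons.comp Primrec.snd (Primrec.const [])))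
  have plook : Primrec₂ look := (Primrec.list_getD 0).comp (pdls.comp Primrec.fst) Primrec.snd
  have pfE {α : Type} [Primcodable α] {x y z : α → ℕ} (hx : Primrec x) (hy : Primrec y) (hz : Primrec z) :
      Primrec fun q => fE (x q) (y q) (z q) := (pr 5 1).comp hx (Primrec₂.natPair.comp hy hz)
  have pfL {α : Type} [Primcodable α] {x y z : α → ℕ} (hx : Primrec x) (hy : Primrec y) (hz : Primrec z) :
      Primrec fun q => fL (x q) (y q) (z q) := (pr 5 2).comp hx (Primrec₂.natPair.comp hy hz)
  unfold base
  repeat' first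
    | with_reducible exact a | with_reducible exact b | with_reducible exact c | with_reducible exact d | with_reducible exact e | with_reducible exact h
    | with_reducible exact Primrec.const _
    | with_reducible refine Primrec.list_cons.comp ?_ ?_
    | with_reducible refine Primrec.pair ?_ (Primrec.const _)
    | with_reducible refine pF.comp ?_ ?_
    | with_reducible refine pE.comp ?_ ?_
    | with_reducible refine pL.comp ?_ ?_
    | with_reducible refine pN.comp ?_ ?_
    | with_reducible refine pW.comp ?_ ?_
    | with_reducible refine ptA.comp ?_ ?_
    | with_reducible refine ptM.comp ?_ ?_
    | with_reducible refine pfI.comp ?_ ?_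
    | with_reducible refine papp.comp ?_ ?_
    | with_reducible refine plook.comp ?_ ?_
    | with_reducible refine pfE ?_ ?_ ?_
    | with_reducible refine pfL ?_ ?_ ?_
    | with_reducible refine ptV.comp ?_
    | with_reducible refine ptS.comp ?_
    | with_reducible refine pfF.comp ?_
    | with_reducible refine pfA.comp ?_
    | with_reducible refine p5.comp ?_

structure Good (V : ℕ → Bool) : Prop where
  refl : ∀ a, V (iE a a) = true
  eucl : ∀ a b c, V (iE a b) = true → V (iE a c) = true → V (iE b c) = true
  var : ∀ i v, V (iE (Nt (tV i) v) (look v i)) = true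
  zero : ∀ k v, V (iE (Nt (5 * k) v) (Nt 0 0)) = true
  succ : ∀ t v t' v', V (iE (Nt t v) (Nt t' v')) = true → V (iE (Nt (tS t) v) (Nt (tS t') v')) = true
  add : ∀ t u v t' u' v', V (iE (Nt t v) (Nt t' v')) = true → V (iE (Nt u v) (Nt u' v')) = true →
    V (iE (Nt (tA t u) v) (Nt (tA t' u') v')) = true
  mul : ∀ t u v t' u' v', V (iE (Nt t v) (Nt t' v')) = true → V (iE (Nt u v) (Nt u' v')) = true →
    V (iE (Nt (tM t u) v) (Nt (tM t' u') v')) = true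
  le : ∀ a b c d, V (iE a b) = true → V (iE c d) = true → V (iL a c) = true → V (iL b d) = true
  fls : ∀ n v, ¬ V (iF (fF n) v) = true
  eq : ∀ n t u v, V (iF (fE n t u) v) = true ↔ V (iE (Nt t v) (Nt u v)) = true
  leq : ∀ n t u v, V (iF (fL n t u) v) = true ↔ V (iL (Nt t v) (Nt u v)) = true
  imp : ∀ a b v, V (iF (fI a b) v) = true ↔ (V (iF a v) = true → V (iF b v) = true)
  all : ∀ a v d, V (iF (fA a) v) = true → V (iF a (app v d)) = true
  wit : ∀ a v, V (iF a (app v (Wt a v))) = true → V (iF (fA a) v) = true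

theorem o2 {A B : Prop} (h : ¬ A ∨ B) : A → B := by tauto
theorem o3 {A B C : Prop} (h : ¬ A ∨ ¬ B ∨ C) : A → B → C := by tauto
theorem o4 {A B C D : Prop} (h : ¬ A ∨ ¬ B ∨ ¬ C ∨ D) : A → B → C → D := by tauto
theorem o5 {A B : Prop} (h : A ∨ ¬ B) : B → A := by tauto
theorem o2r {A B : Prop} (h : A → B) : ¬ A ∨ B := by tauto
theorem o3r {A B C : Prop} (h : A → B → C) : ¬ A ∨ ¬ B ∨ C := by tauto
theorem o4r {A B C D : Prop} (h : A → B → C → D) : ¬ A ∨ ¬ B ∨ ¬ C ∨ D := by tauto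
theorem o5r {A B : Prop} (h : B → A) : A ∨ ¬ B := by tauto
theorem o6 {A B C : Prop} (h1 : ¬ A ∨ ¬ B ∨ C) (h2 : B ∨ A) (h3 : ¬ C ∨ A) : A ↔ (B → C) := by tauto
theorem o6r {A B C : Prop} (h : A ↔ (B → C)) : (¬ A ∨ ¬ B ∨ C) ∧ (B ∨ A) ∧ (¬ C ∨ A) := by tauto

theorem good_iff (V : ℕ → Bool) : (∀ p, ∀ c ∈ base p, satc V c) ↔ Good V := by
  have conv : ∀ x, V x = false ↔ ¬ V x = true := fun x => by simp
  simp only [base, satc, List.forall_mem_cons, List.exists_mem_cons_iff, List.not_mem_nil, false_and, exists_false, or_false, IsEmpty.forall_iff, implies_true, and_true, conv]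
  constructor
  · intro h
    have h' := fun a b c d e i : ℕ => h (a, b, c, d, e, i)
    simp only [forall_and] at h'
    obtain ⟨h1, h2, h3, h4, h5, h6, h7, h8, h9, h10, h10', h11, h11', h12, h12', h12r, h13, h14⟩ := h'
    constructor
    · exact fun a => h1 a 0 0 0 0 0
    · exact fun a b c => o3 (h2 a b c 0 0 0)
    · exact fun a b => h3 a b 0 0 0 0
    · exact fun a b => h4 a b 0 0 0 0
    · exact fun a b c d => o2 (h5 a b c d 0 0)
    · exact fun a b c d e i => o3 (h6 a b c d e i)
    · exact fun a b c d e i => o3 (h7 a b c d e i)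
    · exact fun a b c d => o4 (h8 a b c d 0 0)
    · exact fun a b => h9 a b 0 0 0 0
    · exact fun a b c d => ⟨o2 (h10 a b c d 0 0), o5 (h10' a b c d 0 0)⟩
    · exact fun a b c d => ⟨o2 (h11 a b c d 0 0), o5 (h11' a b c d 0 0)⟩
    · exact fun a b c => o6 (h12 a b c 0 0 0) (h12' a b c 0 0 0) (h12r a b c 0 0 0)
    · exact fun a b c => o2 (h13 a b c 0 0 0)
    · exact fun a b => o2 (h14 a b 0 0 0 0)
  · rintro ⟨h1, h2, h3, h4, h5, h6, h7, h8, h9, h10, h11, h12, h13, h14⟩ ⟨a, b, c, d, e, i⟩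
    exact ⟨h1 _, o3r (h2 _ _ _), h3 _ _, h4 _ _, o2r (h5 _ _ _ _), o3r (h6 _ _ _ _ _ _), o3r (h7 _ _ _ _ _ _),
      o4r (h8 _ _ _ _), h9 _ _, o2r (h10 _ _ _ _).1, o5r (h10 _ _ _ _).2, o2r (h11 _ _ _ _).1,
      o5r (h11 _ _ _ _).2, (o6r (h12 _ _ _)).1, (o6r (h12 _ _ _)).2.1, (o6r (h12 _ _ _)).2.2,
      o2r (h13 _ _ _), o2r (h14 _ _)⟩

theorem dls_enc (l : List ℕ) : dls (Encodable.encode l) = l := Denumerable.ofNat_encode l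

theorem dls_zero : dls 0 = [] := dls_enc []

theorem mem_enc_lt (l : List ℕ) : ∀ x ∈ l, x < Encodable.encode l := by
  induction l with
  | nil => simp
  | cons a l ih =>
    have h : Encodable.encode (a :: l) = Nat.succ (Nat.pair a (Encodable.encode l)) := rfl
    intro x hx
    rw [h]
    rcases List.mem_cons.1 hx with rfl | hx
    · have := Nat.left_le_pair x (Encodable.encode l); omega
    · have := Nat.right_le_pair a (Encodable.encode l); have := ih x hx; omega

theorem mem_dls_lt {x v : ℕ} (h : x ∈ dls v) : x < v := by
  have := mem_enc_lt (dls v) x h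
  rwa [dls, Denumerable.encode_ofNat] at this

theorem dls_app (v d : ℕ) : dls (app v d) = dls v ++ [d] := dls_enc _

section toModel
variable {V : ℕ → Bool} (hV : Good V)

def Good.setoid : Setoid ℕ where
  r a b := V (iE a b) = true
  iseqv := ⟨hV.refl, fun {a b} h => hV.eucl a b a h (hV.refl a),
    fun {a b c} h h' => hV.eucl b a c (hV.eucl a b a h (hV.refl a)) h'⟩

def Good.M : Type := Quotient hV.setoid

def Good.q (a : ℕ) : hV.M := Quotient.mk hV.setoid a

noncomputable def Good.o (x : hV.M) : ℕ := Quotient.out x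

theorem Good.q_o (x : hV.M) : hV.q (hV.o x) = x := Quotient.out_eq x

theorem Good.q_eq (a b : ℕ) : hV.q a = hV.q b ↔ V (iE a b) = true :=
  Quotient.eq (r := hV.setoid)

noncomputable instance Good.str : L.Structure hV.M where
  funMap f v :=
    match f with
    | .zero => hV.q 0
    | .succ => hV.q (Nt (tS (tV 0)) (Encodable.encode [hV.o (v 0)]))
    | .add => hV.q (Nt (tA (tV 0) (tV 1)) (Encodable.encode [hV.o (v 0), hV.o (v 1)]))
    | .mul => hV.q (Nt (tM (tV 0) (tV 1)) (Encodable.encode [hV.o (v 0), hV.o (v 1)]))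
  RelMap r v :=
    match r with
    | .le => V (iL (hV.o (v 0)) (hV.o (v 1))) = true

theorem Good.vz' : vz hV.M = hV.q 0 := rfl
theorem Good.vs' (x : hV.M) : vs x = hV.q (Nt (tS (tV 0)) (Encodable.encode [hV.o x])) := rfl
theorem Good.va' (x y : hV.M) : va x y =
  hV.q (Nt (tA (tV 0) (tV 1)) (Encodable.encode [hV.o x, hV.o y])) := rfl
theorem Good.vm' (x y : hV.M) : vm x y =
  hV.q (Nt (tM (tV 0) (tV 1)) (Encodable.encode [hV.o x, hV.o y])) := rfl
theorem Good.vle' (x y : hV.M) : vle x y ↔ V (iL (hV.o x) (hV.o y)) = true := Iff.rfl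

theorem Good.q_V (i v : ℕ) : hV.q (Nt (tV i) v) = hV.q (look v i) := (hV.q_eq _ _).2 (hV.var i v)

theorem Good.q_S (t v : ℕ) : hV.q (Nt (tS t) v) = vs (hV.q (Nt t v)) := by
  rw [hV.vs', hV.q_eq]
  apply hV.succ
  rw [← hV.q_eq, hV.q_V, look, dls_enc]
  exact (hV.q_o _).symm

theorem Good.q_A (t u v : ℕ) : hV.q (Nt (tA t u) v) = va (hV.q (Nt t v)) (hV.q (Nt u v)) := by
  rw [hV.va', hV.q_eq]
  apply hV.add
  · rw [← hV.q_eq, hV.q_V, look, dls_enc]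
    exact (hV.q_o _).symm
  · rw [← hV.q_eq, hV.q_V, look, dls_enc]
    exact (hV.q_o _).symm

theorem Good.q_M (t u v : ℕ) : hV.q (Nt (tM t u) v) = vm (hV.q (Nt t v)) (hV.q (Nt u v)) := by
  rw [hV.vm', hV.q_eq]
  apply hV.mul
  · rw [← hV.q_eq, hV.q_V, look, dls_enc]
    exact (hV.q_o _).symm
  · rw [← hV.q_eq, hV.q_V, look, dls_enc]
    exact (hV.q_o _).symm

theorem Good.q_le (a b : ℕ) : vle (hV.q a) (hV.q b) ↔ V (iL a b) = true := by
  have h1 : ∀ a, V (iE a (hV.o (hV.q a))) = true := fun a => (hV.q_eq _ _).1 (hV.q_o _).symm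
  have h2 : ∀ a, V (iE (hV.o (hV.q a)) a) = true := fun a => (hV.q_eq _ _).1 (hV.q_o _)
  exact ⟨hV.le _ _ _ _ (h2 a) (h2 b), hV.le _ _ _ _ (h1 a) (h1 b)⟩

theorem Good.tm (t v : ℕ) : hV.q (Nt t v) = tval ((dls v).map hV.q) t := by
  induction t using tcode_ind with
  | h0 k => rw [tval_Z, hV.vz']; exact (hV.q_eq _ _).2 (hV.zero k v)
  | hV i =>
    rw [tval_V, hV.q_V, look, hV.vz', List.getD_map]
  | hS t ih => rw [hV.q_S, ih, tval_S]
  | hA t u ih ih' => rw [hV.q_A, ih, ih', tval_A]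
  | hM t u ih ih' => rw [hV.q_M, ih, ih', tval_M]

theorem Good.fm (c : ℕ) : ∀ v, V (iF c v) = true ↔ sem c ((dls v).map hV.q) := by
  induction c using fcode_ind with
  | h0 n => intro v; rw [sem_F]; exact iff_false_intro (hV.fls n v)
  | hE n t u => intro v; rw [sem_E, ← hV.tm, ← hV.tm, hV.q_eq]; exact hV.eq n t u v
  | hL n t u => intro v; rw [sem_L, ← hV.tm, ← hV.tm, hV.q_le]; exact hV.leq n t u v
  | hI a b ih ih' => intro v; rw [sem_I, ← ih, ← ih']; exact hV.imp a b v
  | hA a ih =>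
    intro v
    have key : ∀ d, sem a ((dls v).map hV.q ++ [hV.q d]) ↔ V (iF a (app v d)) = true := by
      intro d; rw [ih, dls_app, List.map_append]; rfl
    rw [sem_A]
    constructor
    · intro h x
      rw [← hV.q_o x, key]
      exact hV.all a v _ h
    · intro h
      exact hV.wit a v ((key _).1 (h _))

end toModel

section ofModel
variable (M : Type) [L.Structure M]

open Classical in
noncomputable def nu (n : ℕ) : M :=
  if n % 2 = 0 then
    tval ((dls (n / 2).unpair.2).attach.map fun x => nu x.1) (n / 2).unpair.1
  else
    if h : ∃ x, ¬ sem (n / 2).unpair.1 (((dls (n / 2).unpair.2).attach.map fun x => nu x.1) ++ [x]) then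
      h.choose
    else vz M
termination_by n
decreasing_by
  all_goals
    have h1 := mem_dls_lt x.2
    have h2 := Nat.unpair_right_le (n / 2)
    omega

theorem nu_N (t v : ℕ) : nu M (Nt t v) = tval ((dls v).map (nu M)) t := by
  rw [nu, if_pos (by simp [Nt])]
  have : Nt t v / 2 = Nat.pair t v := by simp [Nt]
  rw [this, Nat.unpair_pair]
  simp

theorem nu_W (a v : ℕ) (h : sem a ((dls v).map (nu M) ++ [nu M (Wt a v)])) :
    ∀ x, sem a ((dls v).map (nu M) ++ [x]) := by
  by_contra hn
  push Not at hn
  have h1 : Wt a v / 2 = Nat.pair a v := by rw [Wt]; omega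
  have h2 : ¬ Wt a v % 2 = 0 := by rw [Wt]; omega
  have h3 : ((dls v).attach.map fun x => nu M x.1) = (dls v).map (nu M) := by simp
  rw [nu, if_neg h2, h1, Nat.unpair_pair] at h
  have hn' : ∃ x, ¬ sem a (((dls v).attach.map fun x => nu M x.1) ++ [x]) := by
    rw [h3]; exact hn
  beta_reduce at h
  rw [dif_pos hn'] at h
  have hs := hn'.choose_spec
  generalize hn'.choose = y at h hs
  rw [h3] at hs
  exact hs h

open Classical in
noncomputable def VM (i : ℕ) : Bool :=
  if i % 3 = 0 then decide (sem (i / 3).unpair.1 ((dls (i / 3).unpair.2).map (nu M)))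
  else if i % 3 = 1 then decide (nu M (i / 3).unpair.1 = nu M (i / 3).unpair.2)
  else decide (vle (nu M (i / 3).unpair.1) (nu M (i / 3).unpair.2))

theorem VM_F (c v : ℕ) : VM M (iF c v) = true ↔ sem c ((dls v).map (nu M)) := by
  have h1 : iF c v / 3 = Nat.pair c v := by rw [iF]; omega
  have h2 : iF c v % 3 = 0 := by rw [iF]; omega
  rw [VM, if_pos h2, h1, Nat.unpair_pair]; exact @decide_eq_true_iff _ (_)

theorem VM_E (c v : ℕ) : VM M (iE c v) = true ↔ nu M c = nu M v := by
  have h1 : iE c v / 3 = Nat.pair c v := by rw [iE]; omega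
  have h2 : iE c v % 3 = 1 := by rw [iE]; omega
  rw [VM, if_neg (by omega), if_pos h2, h1, Nat.unpair_pair]; exact @decide_eq_true_iff _ (_)

theorem VM_L (c v : ℕ) : VM M (iL c v) = true ↔ vle (nu M c) (nu M v) := by
  have h1 : iL c v / 3 = Nat.pair c v := by rw [iL]; omega
  have h2 : iL c v % 3 = 2 := by rw [iL]; omega
  rw [VM, if_neg (by omega), if_neg (by omega), h1, Nat.unpair_pair]; exact @decide_eq_true_iff _ (_)

theorem nu_0 : nu M 0 = vz M := by
  have h : Nt 0 0 = 0 := rfl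
  have := nu_N M 0 0
  rw [h] at this
  rw [this]
  exact tval_Z _ 0

theorem good_VM : Good (VM M) := by
  constructor
  · intro a; rw [VM_E]
  · intro a b c; rw [VM_E, VM_E, VM_E]; intro h h'; rw [← h, h']
  · intro i v; rw [VM_E, nu_N, tval_V, look, ← nu_0, List.getD_map]
  · intro k v; rw [VM_E, nu_N, nu_N, tval_Z]; exact (tval_Z _ 0).symm
  · intro t v t' v'; rw [VM_E, VM_E, nu_N, nu_N, nu_N, nu_N, tval_S, tval_S]; intro h; rw [h]
  · intro t u v t' u' v'; simp only [VM_E, nu_N, tval_A]; intro h h'; rw [h, h']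
  · intro t u v t' u' v'; simp only [VM_E, nu_N, tval_M]; intro h h'; rw [h, h']
  · intro a b c d; simp only [VM_E, VM_L]; intro h h'; rw [h, h']; exact id
  · intro n v; rw [VM_F, sem_F]; exact id
  · intro n t u v; rw [VM_F, VM_E, sem_E, nu_N, nu_N]
  · intro n t u v; rw [VM_F, VM_L, sem_L, nu_N, nu_N]
  · intro a b v; rw [VM_F, VM_F, VM_F, sem_I]
  · intro a v d; rw [VM_F, VM_F, sem_A, dls_app, List.map_append]; intro h; exact h _
  · intro a v; rw [VM_F, VM_F, sem_A, dls_app, List.map_append]; exact nu_W M a v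

end ofModel

/-- there is a model of `T`, `x`, `y` and the negation of `z` -/
def SatP (T : L.Theory) (p : ℕ × ℕ × ℕ) : Prop :=
  ∃ (M : Type) (_ : L.Structure M), M ⊨ T ∧ sem (M := M) p.1 [] ∧ sem (M := M) p.2.1 [] ∧
    ¬ sem (M := M) p.2.2 []

theorem SatP_iff (T : L.Theory) (p : ℕ × ℕ × ℕ) : SatP T p ↔ ∃ V : ℕ → Bool,
    Good V ∧ (∀ φ ∈ T, V (iF (cd φ) 0) = true) ∧ V (iF p.1 0) = true ∧ V (iF p.2.1 0) = true ∧
      V (iF p.2.2 0) = false := by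
  constructor
  · rintro ⟨M, _, hT, h1, h2, h3⟩
    refine ⟨VM M, good_VM M, fun φ hφ => ?_, ?_, ?_, ?_⟩
    · rw [VM_F, dls_zero, List.map_nil, sem_sent]
      exact hT.realize_of_mem φ hφ
    · rwa [VM_F, dls_zero]
    · rwa [VM_F, dls_zero]
    · rw [← Bool.not_eq_true]; rwa [VM_F, dls_zero]
  · rintro ⟨V, hV, hT, h1, h2, h3⟩
    refine ⟨hV.M, inferInstance, ⟨fun φ hφ => ?_⟩, ?_, ?_, ?_⟩
    · have := (hV.fm _ _).1 (hT φ hφ)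
      rwa [dls_zero, List.map_nil, sem_sent] at this
    · have := (hV.fm _ _).1 h1
      rwa [dls_zero] at this
    · have := (hV.fm _ _).1 h2
      rwa [dls_zero] at this
    · rw [← Bool.not_eq_true, hV.fm, dls_zero] at h3
      exact h3

def axc (tbl : List Bool) (a : ℕ) : List Clause :=
  bif isS a && tbl.getD (gn a) false then ([(iF a 0, true)] :: []) else []

def Cl (m : ℕ) (tbl : List Bool) (p : ℕ × ℕ × ℕ) : List Clause :=
  ((List.range m).flatMap fun a => base (Denumerable.ofNat _ a) ++ axc tbl a) ++
    [ [(iF p.1 0, true)], [(iF p.2.1 0, true)], [(iF p.2.2 0, false)] ]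

theorem prim_iF0 : Primrec fun a => iF a 0 :=
  Primrec.nat_mul.comp (Primrec.const 3) (Primrec₂.natPair.comp Primrec.id (Primrec.const 0))

theorem prim_axc : Primrec₂ axc := by
  have s : Primrec fun z : List Bool × ℕ => z.1 := Primrec.fst
  have a : Primrec fun z : List Bool × ℕ => z.2 := Primrec.snd
  refine Primrec.cond (Primrec.and.comp (prim_isS.comp a)
    ((Primrec.list_getD false).comp s (prim_gn.comp a))) ?_ (Primrec.const _)
  exact Primrec.list_cons.comp (Primrec.list_cons.comp
    ((prim_iF0.comp a).pair (Primrec.const true)) (Primrec.const [])) (Primrec.const [])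

theorem prim_Cl : Primrec fun z : ℕ × List Bool × ℕ × ℕ × ℕ => Cl z.1 z.2.1 z.2.2 := by
  have x : Primrec fun z : ℕ × List Bool × ℕ × ℕ × ℕ => z.2.2.1 :=
    Primrec.fst.comp (Primrec.snd.comp Primrec.snd)
  have y : Primrec fun z : ℕ × List Bool × ℕ × ℕ × ℕ => z.2.2.2.1 :=
    Primrec.fst.comp (Primrec.snd.comp (Primrec.snd.comp Primrec.snd))
  have w : Primrec fun z : ℕ × List Bool × ℕ × ℕ × ℕ => z.2.2.2.2 :=
    Primrec.snd.comp (Primrec.snd.comp (Primrec.snd.comp Primrec.snd))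
  have u {f : ℕ × List Bool × ℕ × ℕ × ℕ → ℕ} (hf : Primrec f) (b : Bool) :
      Primrec fun z => ([(iF (f z) 0, b)] : Clause) :=
    Primrec.list_cons.comp ((prim_iF0.comp hf).pair (Primrec.const b)) (Primrec.const [])
  refine Primrec.list_append.comp ?_ (Primrec.list_cons.comp (u x _)
    (Primrec.list_cons.comp (u y _) (Primrec.list_cons.comp (u w _) (Primrec.const []))))
  refine Primrec.list_flatMap (Primrec.list_range.comp Primrec.fst) ?_
  refine Primrec.list_append.comp (prim_base.comp ((Primrec.ofNat _).comp Primrec.snd)) ?_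
  exact prim_axc.comp ((Primrec.fst.comp Primrec.snd).comp Primrec.fst) Primrec.snd

theorem comp_tbl {f : ℕ → Bool} (hf : Computable f) : Computable fun m => (List.range m).map f := by
  have : (fun m => (List.range m).map f) =
      fun m => (Nat.rec [] (fun k ih => ih ++ [f k]) m : List Bool) := by
    funext m
    induction m with
    | zero => rfl
    | succ m ih => simp only [List.range_succ, List.map_append, ih]; rfl
  rw [this]
  refine Computable.nat_rec (f := fun m : ℕ => m) (g := fun _ => ([] : List Bool))
    (h := fun _ p => p.2 ++ [f p.1]) Computable.id (Computable.const _) ?_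
  refine Primrec.list_append.to_comp.comp (Computable.snd.comp Computable.snd) ?_
  exact Primrec.list_cons.to_comp.comp (hf.comp (Computable.fst.comp Computable.snd)) (Computable.const _)

def Cf (f : ℕ → Bool) (p : ℕ × ℕ × ℕ) (m : ℕ) : List Clause := Cl m ((List.range m).map f) p

theorem mem_axc (f : ℕ → Bool) (m a : ℕ) (c : Clause) :
    c ∈ axc ((List.range m).map f) a ↔ isS a = true ∧ gn a < m ∧ f (gn a) = true ∧ c = [(iF a 0, true)] := by
  rw [axc]
  by_cases h : gn a < m
  · have : ((List.range m).map f).getD (gn a) false = f (gn a) := by simp [List.getD, h]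
    rw [this]
    cases isS a <;> cases f (gn a) <;> simp [h]
  · have : ((List.range m).map f).getD (gn a) false = false := by
      simp [List.getD, h]
    rw [this]; simp [h]

theorem Cf_mono (f : ℕ → Bool) (p : ℕ × ℕ × ℕ) (m n : ℕ) (h : m ≤ n) : Cf f p m ⊆ Cf f p n := by
  intro c
  rw [Cf, Cf, Cl, Cl, List.mem_append, List.mem_append, List.mem_flatMap, List.mem_flatMap]
  refine Or.imp ?_ id
  rintro ⟨a, ha, hc⟩
  refine ⟨a, ?_, ?_⟩
  · rw [List.mem_range] at *; omega
  · rw [List.mem_append] at *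
    refine hc.imp id ?_
    rw [mem_axc, mem_axc]
    rintro ⟨h1, h2, h3⟩
    exact ⟨h1, by omega, h3⟩

theorem SatP_iff_Dst {T : L.Theory} {f : ℕ → Bool} (hf : ∀ φ : Sent, (φ ∈ T ↔ f (gnum φ) = true))
    (p : ℕ × ℕ × ℕ) : SatP T p ↔ ∀ m, Dst (Cf f p m) m = true := by
  rw [← sat_compact _ (Cf_mono f p), SatP_iff]
  refine exists_congr fun V => ?_
  have u : ∀ a b, satc V [(iF a 0, b)] ↔ V (iF a 0) = b := by simp [satc]
  constructor
  · rintro ⟨hV, hT, h1, h2, h3⟩ m c hc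
    rw [Cf, Cl, List.mem_append, List.mem_flatMap] at hc
    rcases hc with ⟨a, -, hc⟩ | hc
    · rw [List.mem_append, mem_axc] at hc
      rcases hc with hc | ⟨hs, -, hg, rfl⟩
      · exact (good_iff V).2 hV _ c hc
      · obtain ⟨φ, rfl⟩ := isS_conv hs
        rw [gn_cd, ← hf] at hg
        rw [u]
        exact hT φ hg
    · simp only [List.mem_cons, List.not_mem_nil, or_false] at hc
      rcases hc with rfl | rfl | rfl
      · rwa [u]
      · rwa [u]
      · rwa [u]
  · intro h
    have hu : ∀ c ∈ [ [(iF p.1 0, true)], [(iF p.2.1 0, true)], [(iF p.2.2 0, false)] ], satc V c :=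
      fun c hc => h 0 c (by rw [Cf, Cl]; exact List.mem_append_right _ hc)
    refine ⟨(good_iff V).1 fun q c hc => ?_, fun φ hφ => ?_, ?_, ?_, ?_⟩
    · refine h (Encodable.encode q + 1) c ?_
      rw [Cf, Cl, List.mem_append, List.mem_flatMap]
      refine Or.inl ⟨Encodable.encode q, by simp, ?_⟩
      rw [List.mem_append, Denumerable.ofNat_encode]
      exact Or.inl hc
    · rw [← u]
      refine h (cd φ + gnum φ + 1) _ ?_
      rw [Cf, Cl, List.mem_append, List.mem_flatMap]
      refine Or.inl ⟨cd φ, by rw [List.mem_range]; omega, ?_⟩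
      rw [List.mem_append, mem_axc, gn_cd]
      exact Or.inr ⟨isS_cd φ, by omega, (hf φ).1 hφ, rfl⟩
    · rw [← u]; exact hu _ (by simp)
    · rw [← u]; exact hu _ (by simp)
    · rw [← u]; exact hu _ (by simp)

theorem comp_Cl : Computable fun z : ℕ × List Bool × ℕ × ℕ × ℕ => Cl z.1 z.2.1 z.2.2 := prim_Cl.to_comp

theorem comp_Dst : Computable₂ Dst := prim_Dst.to_comp

theorem comp_Cf {f : ℕ → Bool} (cf : Computable f) :
    Computable fun z : ℕ × ℕ × ℕ × ℕ => Cf f z.2 z.1 := by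
  have h0 : Computable fun z : ℕ × ℕ × ℕ × ℕ => (List.range z.1).map f :=
    (comp_tbl cf).comp Computable.fst
  have h1 : Computable fun z : ℕ × ℕ × ℕ × ℕ => (z.1, (List.range z.1).map f, z.2) :=
    Computable.fst.pair (h0.pair Computable.snd)
  have h2 := comp_Cl.comp h1
  exact h2

open Classical in
theorem LC_SatP {T : L.Theory} (hT : RecursivelyAxiomatized T) : LC fun p => decide (SatP T p) := by
  obtain ⟨f, cf, hf⟩ := hT
  refine LC.of_anti (D := fun m p => Dst (Cf f p m) m) ?_ ?_ ?_
  · exact comp_Dst.comp (comp_Cf cf) Computable.fst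
  · intro p m n hmn h
    rw [Dst_iff] at *
    obtain ⟨V, hV⟩ := h
    refine ⟨V, fun c hc => ?_⟩
    obtain ⟨l, hl, h⟩ := hV c (Cf_mono f p m n hmn hc)
    exact ⟨l, hl, h.imp id (by omega)⟩
  · intro p
    rw [decide_eq_true_eq, SatP_iff_Dst hf]

/-! ### provability through models -/

theorem prov_iff (T : L.Theory) (φ : Sent) :
    Prov T φ ↔ ∀ (M : Type) [L.Structure M], M ⊨ T → M ⊨ φ := by
  rw [Prov, Theory.models_sentence_iff]
  constructor
  · intro h M _ hM
    have : Nonempty M := ⟨vz M⟩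
    exact h (Theory.ModelType.of T M)
  · intro h M
    exact h M inferInstance

theorem implies_iff (T : L.Theory) (φ ψ : Sent) :
    Implies T φ ψ ↔ ∀ (M : Type) [L.Structure M], M ⊨ T → M ⊨ φ → M ⊨ ψ := by
  rw [Implies, prov_iff]
  constructor
  · intro h M _ hM hφ
    refine h M ⟨fun χ hχ => ?_⟩
    rcases hχ with hχ | hχ
    · exact hM.realize_of_mem χ hχ
    · rw [Set.mem_singleton_iff.1 hχ]; exact hφ
  · intro h M _ hM
    exact h M ⟨fun χ hχ => hM.realize_of_mem χ (Or.inl hχ)⟩ (hM.realize_of_mem φ (Or.inr rfl))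

theorem cons_iff (T : L.Theory) (φ : Sent) :
    ConsistentWith T φ ↔ ∃ (M : Type) (_ : L.Structure M), M ⊨ T ∧ M ⊨ φ := by
  rw [ConsistentWith, implies_iff]
  constructor
  · intro h
    by_contra h'
    refine h fun M _ hM hφ => ?_
    exact absurd ⟨M, _, hM, hφ⟩ h'
  · rintro ⟨M, _, hM, hφ⟩ h
    exact h M hM hφ

theorem r_imp {M : Type} [L.Structure M] (φ ψ : Sent) : M ⊨ (φ ⟹ ψ : Sent) ↔ (M ⊨ φ → M ⊨ ψ) :=
  BoundedFormula.realize_imp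
theorem r_inf {M : Type} [L.Structure M] (φ ψ : Sent) : M ⊨ (φ ⊓ ψ : Sent) ↔ (M ⊨ φ ∧ M ⊨ ψ) :=
  BoundedFormula.realize_inf
theorem r_iff {M : Type} [L.Structure M] (φ ψ : Sent) : M ⊨ (φ ⇔ ψ : Sent) ↔ (M ⊨ φ ↔ M ⊨ ψ) :=
  BoundedFormula.realize_iff
theorem r_not {M : Type} [L.Structure M] (φ : Sent) : M ⊨ (φ.not : Sent) ↔ ¬ M ⊨ φ :=
  BoundedFormula.realize_not
theorem r_bot {M : Type} [L.Structure M] : ¬ M ⊨ (⊥ : Sent) := fun h => h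

section
variable (T : L.Theory)

open Classical in
noncomputable def sat (x y z : ℕ) : Bool := decide (SatP T (x, y, z))

theorem sat_iff (x y z : ℕ) : sat T x y z = true ↔
    ∃ (M : Type) (_ : L.Structure M), M ⊨ T ∧ sem (M := M) x [] ∧ sem (M := M) y [] ∧
    ¬ sem (M := M) z [] := by
  rw [sat]; exact @decide_eq_true_iff _ (_)

noncomputable def cn (x : ℕ) : Bool := sat T x x 0
noncomputable def im (x y : ℕ) : Bool := !sat T x x y

theorem cn_iff (x : ℕ) : cn T x = true ↔
    ∃ (M : Type) (_ : L.Structure M), M ⊨ T ∧ sem (M := M) x [] := by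
  rw [cn, sat_iff]
  refine exists_congr fun M => exists_congr fun _ => ?_
  have : ¬ sem (M := M) 0 [] := fun h => (sem_F [] 0).1 h
  tauto

theorem im_iff (x y : ℕ) : im T x y = true ↔
    ∀ (M : Type) [L.Structure M], M ⊨ T → sem (M := M) x [] → sem (M := M) y [] := by
  rw [im, Bool.not_eq_true', ← Bool.not_eq_true, sat_iff]
  constructor
  · intro h M _ hM hx
    by_contra hy
    exact h ⟨M, _, hM, hx, hx, hy⟩
  · rintro h ⟨M, _, hM, hx, -, hy⟩
    exact hy (h M hM hx)

structure Hp : Prop where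
  nat : ℕ ⊨ T
  pi : ∀ c, isP c = true → cn T c = true → sem (M := ℕ) c []
  ra : RecursivelyAxiomatized T
  ninf : ∀ φ : Sent, cn T (cd φ) = true → ∃ c, isP c = true ∧ cn T c = true ∧ im T (cd φ) c = false

variable {T}

theorem mk_Hp {ea : L.Theory} (hT_sound : Sound T) (hT_rec : RecursivelyAxiomatized T)
    (hea : IsEA ea) (hext : ea ⊆ T) {con : Sent → Sent} (hcon : IsConOperator T con) : Hp T := by
  have hn : ℕ ⊨ T := ⟨fun φ h => hT_sound φ h⟩
  refine ⟨hn, ?_, hT_rec, ?_⟩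
  · intro c hc h
    obtain ⟨φ, rfl, n, θ, hθ, rfl⟩ := isP_conv hc
    rw [sem_sent]
    by_contra hf
    obtain ⟨M, _, hM, hs⟩ := (cn_iff _ _).1 h
    rw [sem_sent] at hs
    have h1 : ∀ (M : Type) [L.Structure M], M ⊨ (θ.imp BoundedFormula.falsum).exs ↔ ¬ M ⊨ θ.alls := by
      intro M _
      rw [realize_alls_sent]
      rw [Sentence.Realize, BoundedFormula.realize_exs]
      push Not
      refine exists_congr fun xs => ?_
      exact BoundedFormula.realize_imp
    have h2 := hea.sigma1_complete _ ⟨n, _, hθ.imp .falsum, rfl⟩ ((h1 ℕ).2 hf)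
    rw [prov_iff] at h2
    exact (h1 M).1 (h2 M ⟨fun χ hχ => hM.realize_of_mem χ (hext hχ)⟩) hs
  · intro φ h
    have hc : ConsistentWith T φ := by
      rw [cons_iff]
      obtain ⟨M, _, hM, hs⟩ := (cn_iff _ _).1 h
      exact ⟨M, _, hM, (sem_sent φ).1 hs⟩
    obtain ⟨χ, hχ, he⟩ := pi_conj (hcon.pi1 φ) (hcon.pi1 φ)
    refine ⟨cd χ, hχ, ?_, ?_⟩
    · rw [cn_iff]
      refine ⟨ℕ, _, hn, ?_⟩
      rw [sem_sent, he]
      exact ⟨(hcon.true_iff φ).2 hc, (hcon.true_iff φ).2 hc⟩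
    · rw [← Bool.not_eq_true, im_iff]
      intro h'
      refine hcon.goedel2 φ hc ((implies_iff ..).2 fun M _ hM hφ => ?_)
      have := h' M hM ((sem_sent φ).2 hφ)
      rw [sem_sent, he] at this
      exact this.1

theorem ex_top : ∃ c, isP c = true ∧ ∀ (M : Type) [L.Structure M], sem (M := M) c [] := by
  have h : IsPi1 ((⊥ : Sent).imp ⊥) := ⟨0, _, IsDelta0.imp .falsum .falsum, rfl⟩
  obtain ⟨χ, h1, h2⟩ := pi_conj h h
  refine ⟨cd χ, h1, fun M _ => ?_⟩
  rw [sem_sent, h2]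
  exact ⟨(r_imp ..).2 id, (r_imp ..).2 id⟩

theorem ex_bot : ∃ c, isP c = true ∧ ∀ (M : Type) [L.Structure M], ¬ sem (M := M) c [] := by
  have h : IsPi1 (⊥ : Sent) := ⟨0, _, .falsum, rfl⟩
  obtain ⟨χ, h1, h2⟩ := pi_conj h h
  refine ⟨cd χ, h1, fun M _ => ?_⟩
  rw [sem_sent, h2]
  exact fun h => r_bot h.1

noncomputable def top : ℕ := ex_top.choose
noncomputable def bot : ℕ := ex_bot.choose

variable (T)

noncomputable def pS (z : (ℕ × ℕ) × ℕ) : Bool :=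
  (isP z.2 && cn T z.2 && im T z.2 z.1.2 && (!(isP z.1.1 && cn T z.1.1) || im T z.2 z.1.1)) ||
    !(isP z.1.2 && cn T z.1.2)

noncomputable def stp (q : ℕ × ℕ) : ℕ := sInf {c | pS T (q, c) = true}

noncomputable def tau (n : ℕ) : ℕ := Nat.rec top (fun k ih => stp T (k, ih)) n

noncomputable def pN (z : ℕ × ℕ) : Bool :=
  !(isS z.1 && cn T z.1) || !im T z.1 (tau T z.2)

noncomputable def NN (x : ℕ) : ℕ := sInf {n | pN T (x, n) = true}

noncomputable def pc (z : ℕ × ℕ) (i : ℕ) : Bool :=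
  !(isS i && sat T i (tau T z.2) 0) || sat T i (tau T z.2) z.1

noncomputable def cond (z : ℕ × ℕ) : Bool := allB (pc T z) (z.2 + 1)

noncomputable def main (x : ℕ) : ℕ :=
  bif cn T x then bif cond T (x, NN T x) then tau T (NN T x) else tau T (NN T x - 1) else bot

noncomputable def pA (z : ℕ × ℕ) : Bool :=
  isP z.2 && !(decide (z.2 = main T z.1)) && im T z.2 (main T z.1) && im T (main T z.1) z.2

noncomputable def alt (x : ℕ) : ℕ := sInf {c | pA T (x, c) = true}

def ix (x : ℕ) : ℕ := ((dls (gn x)).length - 1) / 2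

open Classical in
noncomputable def nR (z : ℕ × ℕ × ℕ) : Bool :=
  decide (¬ z.2.2 ∈ (Denumerable.ofNat Nat.Partrec.Code z.1).eval z.2.1)

noncomputable def gc (x : ℕ) : ℕ :=
  bif nR (ix x, gn x, gn (main T x)) then main T x else alt T x

variable {T} (H : Hp T)

theorem find_spec {α : Type} {p : α × ℕ → Bool} (h : ∀ a, ∃ c, p (a, c) = true) (a : α) :
    p (a, sInf {c | p (a, c) = true}) = true := Nat.sInf_mem (s := {c | p (a, c) = true}) (h a)

theorem LC_find {α : Type} [Primcodable α] {p : α × ℕ → Bool} (hp : LC p)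
    (h : ∀ a, ∃ c, p (a, c) = true) : LC fun a => sInf {c | p (a, c) = true} :=
  LC.find hp (fun a => find_spec h a) fun a k hk => by
    have := Nat.notMem_of_lt_sInf hk
    simpa using this

theorem isP_top : isP top = true := ex_top.choose_spec.1
theorem sem_top (M : Type) [L.Structure M] : sem (M := M) top [] := ex_top.choose_spec.2 M
theorem isP_bot : isP bot = true := ex_bot.choose_spec.1
theorem sem_bot (M : Type) [L.Structure M] : ¬ sem (M := M) bot [] := ex_bot.choose_spec.2 M

include H

theorem cn_top : cn T top = true := (cn_iff ..).2 ⟨ℕ, _, H.nat, sem_top ℕ⟩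

theorem ex_stp (q : ℕ × ℕ) : ∃ c, pS T (q, c) = true := by
  by_cases h : isP q.2 = true ∧ cn T q.2 = true
  · by_cases h' : isP q.1 = true ∧ cn T q.1 = true
    · obtain ⟨φ, h1, h2⟩ := isP_conv h.1
      obtain ⟨ψ, h3, h4⟩ := isP_conv h'.1
      obtain ⟨χ, h5, h6⟩ := pi_conj h2 h4
      have i1 : im T (cd χ) q.2 = true := by
        rw [im_iff, ← h1]; intro M _ _; rw [sem_sent, sem_sent, h6]; exact And.left
      have i2 : im T (cd χ) q.1 = true := by
        rw [im_iff, ← h3]; intro M _ _; rw [sem_sent, sem_sent, h6]; exact And.right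
      have i3 : cn T (cd χ) = true := by
        refine (cn_iff ..).2 ⟨ℕ, _, H.nat, ?_⟩
        rw [sem_sent, h6, ← sem_sent, ← sem_sent, h1, h3]
        exact ⟨H.pi _ h.1 h.2, H.pi _ h'.1 h'.2⟩
      exact ⟨cd χ, by simp [pS, h5, i1, i2, i3]⟩
    · have i1 : im T q.2 q.2 = true := (im_iff ..).2 fun M _ _ => id
      refine ⟨q.2, ?_⟩
      simp only [pS, h.1, h.2, i1]
      rw [← Bool.and_eq_true, Bool.not_eq_true] at h'
      simp [h']
  · refine ⟨0, ?_⟩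
    rw [← Bool.and_eq_true, Bool.not_eq_true] at h
    simp [pS, h]

theorem tau_ok (n : ℕ) : isP (tau T n) = true ∧ cn T (tau T n) = true := by
  induction n with
  | zero => exact ⟨isP_top, cn_top H⟩
  | succ n ih =>
    have : pS T ((n, tau T n), tau T (n + 1)) = true := find_spec (ex_stp H) (n, tau T n)
    simp only [pS, ih.1, ih.2] at this
    simp at this
    tauto

theorem tau_step (n : ℕ) : im T (tau T (n + 1)) (tau T n) = true := by
  have ih := tau_ok H n
  have : pS T ((n, tau T n), tau T (n + 1)) = true := find_spec (ex_stp H) (n, tau T n)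
  simp only [pS, ih.1, ih.2] at this
  simp at this
  tauto

theorem tau_cof (n : ℕ) (h1 : isP n = true) (h2 : cn T n = true) : im T (tau T (n + 1)) n = true := by
  have ih := tau_ok H n
  have : pS T ((n, tau T n), tau T (n + 1)) = true := find_spec (ex_stp H) (n, tau T n)
  simp only [pS, ih.1, ih.2, h1, h2] at this
  simp at this
  tauto

theorem tau_mono {m n : ℕ} (h : m ≤ n) (M : Type) [L.Structure M] (hM : M ⊨ T)
    (hs : sem (M := M) (tau T n) []) : sem (M := M) (tau T m) [] := by
  induction n, h using Nat.le_induction with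
  | base => exact hs
  | succ n _ ih => exact ih ((im_iff ..).1 (tau_step H n) M hM hs)

theorem ex_N (x : ℕ) : ∃ n, pN T (x, n) = true := by
  by_cases h : isS x = true ∧ cn T x = true
  · obtain ⟨φ, rfl⟩ := isS_conv h.1
    obtain ⟨c, h1, h2, h3⟩ := H.ninf φ h.2
    refine ⟨c + 1, ?_⟩
    have : im T (cd φ) (tau T (c + 1)) = false := by
      rw [← Bool.not_eq_true, im_iff] at h3 ⊢
      exact fun h' => h3 fun M _ hM hx => (im_iff ..).1 (tau_cof H c h1 h2) M hM (h' M hM hx)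
    simp [pN, this]
  · refine ⟨0, ?_⟩
    rw [← Bool.and_eq_true, Bool.not_eq_true] at h
    simp [pN, h]

theorem isP_main (x : ℕ) : isP (main T x) = true := by
  rw [main]
  cases cn T x
  · exact isP_bot
  · cases cond T (x, NN T x)
    · exact (tau_ok H _).1
    · exact (tau_ok H _).1

theorem ex_A (x : ℕ) : ∃ c, pA T (x, c) = true := by
  obtain ⟨χ, h1, h2, h3⟩ := pi_alt (isP_main H x)
  refine ⟨cd χ, ?_⟩
  have i1 : im T (cd χ) (main T x) = true := (im_iff ..).2 fun M _ _ h => by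
    rwa [sem_sent, h3] at h
  have i2 : im T (main T x) (cd χ) = true := (im_iff ..).2 fun M _ _ h => by
    rwa [sem_sent, h3]
  simp [pA, h1, h2, i1, i2]

/-! ### limit computability -/

theorem LC_sat {α : Type} [Primcodable α] {x y z : α → ℕ} (hx : LC x) (hy : LC y) (hz : LC z) :
    LC fun a => sat T (x a) (y a) (z a) :=
  LC.comp (f := fun p : ℕ × ℕ × ℕ => sat T p.1 p.2.1 p.2.2) (LC_SatP H.ra) (hx.pair (hy.pair hz))

theorem LC_cn {α : Type} [Primcodable α] {x : α → ℕ} (hx : LC x) : LC fun a => cn T (x a) :=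
  LC_sat H hx hx (LC.of_prim (Primrec.const 0))

theorem LC_im {α : Type} [Primcodable α] {x y : α → ℕ} (hx : LC x) (hy : LC y) :
    LC fun a => im T (x a) (y a) := (LC_sat H hx hx hy).not

omit H in
theorem LC_isP {α : Type} [Primcodable α] {x : α → ℕ} (hx : LC x) : LC fun a => isP (x a) :=
  (LC.of_prim prim_isP).comp hx

omit H in
theorem LC_isS {α : Type} [Primcodable α] {x : α → ℕ} (hx : LC x) : LC fun a => isS (x a) :=
  (LC.of_prim prim_isS).comp hx

omit H in
theorem LC_gn {α : Type} [Primcodable α] {x : α → ℕ} (hx : LC x) : LC fun a => gn (x a) :=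
  (LC.of_prim prim_gn).comp hx

theorem LC_stp : LC (stp T) := by
  refine LC_find ?_ (ex_stp H)
  have a : LC fun z : (ℕ × ℕ) × ℕ => z.1.1 := LC.of_prim (Primrec.fst.comp Primrec.fst)
  have b : LC fun z : (ℕ × ℕ) × ℕ => z.1.2 := LC.of_prim (Primrec.snd.comp Primrec.fst)
  have c : LC fun z : (ℕ × ℕ) × ℕ => z.2 := LC.of_prim Primrec.snd
  exact ((((LC_isP c).and (LC_cn H c)).and (LC_im H c b)).and
    (((LC_isP a).and (LC_cn H a)).not.or (LC_im H c a))).or ((LC_isP b).and (LC_cn H b)).not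

theorem LC_tau : LC (tau T) := by
  refine LC.nat_rec (α := ℕ) (f := fun _ => top) (h := fun q => stp T q.2) (n := fun n => n)
    (LC.of_prim (Primrec.const _)) ?_ (LC.of_prim Primrec.id)
  exact (LC_stp H).comp (LC.of_prim Primrec.snd)

theorem LC_NN : LC (NN T) := by
  refine LC_find ?_ (ex_N H)
  have a : LC fun z : ℕ × ℕ => z.1 := LC.of_prim Primrec.fst
  have b : LC fun z : ℕ × ℕ => z.2 := LC.of_prim Primrec.snd
  exact ((LC_isS a).and (LC_cn H a)).not.or (LC_im H a ((LC_tau H).comp b)).not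

theorem LC_cond : LC (cond T) := by
  refine LC.allB (p := pc T) ?_ (LC.of_prim (Primrec.succ.comp Primrec.snd))
  have x : LC fun z : (ℕ × ℕ) × ℕ => z.1.1 := LC.of_prim (Primrec.fst.comp Primrec.fst)
  have n : LC fun z : (ℕ × ℕ) × ℕ => z.1.2 := LC.of_prim (Primrec.snd.comp Primrec.fst)
  have i : LC fun z : (ℕ × ℕ) × ℕ => z.2 := LC.of_prim Primrec.snd
  have t := (LC_tau H).comp n
  exact ((LC_isS i).and (LC_sat H i t (LC.of_prim (Primrec.const 0)))).not.or (LC_sat H i t x)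

theorem LC_main : LC (main T) := by
  have i : LC fun x : ℕ => x := LC.of_prim Primrec.id
  refine LC.cond (LC_cn H i) (LC.cond ((LC_cond H).comp (i.pair (LC_NN H))) ((LC_tau H).comp (LC_NN H)) ?_)
    (LC.of_prim (Primrec.const _))
  exact (LC_tau H).comp ((LC.of_prim Primrec.pred).comp (LC_NN H))

theorem LC_alt : LC (alt T) := by
  refine LC_find ?_ (ex_A H)
  have a : LC fun z : ℕ × ℕ => main T z.1 := (LC_main H).comp (LC.of_prim Primrec.fst)
  have b : LC fun z : ℕ × ℕ => z.2 := LC.of_prim Primrec.snd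
  have e : LC fun z : ℕ × ℕ => decide (z.2 = main T z.1) :=
    LC.comp₂ (f := fun x y : ℕ => decide (x = y)) (Primrec.eq.decide) b a
  exact (((LC_isP b).and e.not).and (LC_im H b a)).and (LC_im H a b)

omit H in
theorem LC_ix : LC ix := by
  refine LC.of_prim ?_
  exact Primrec.nat_div.comp (Primrec.nat_sub.comp (Primrec.list_length.comp
    ((Primrec.ofNat _).comp prim_gn)) (Primrec.const 1)) (Primrec.const 2)

omit H in
theorem LC_nR : LC nR := by
  refine LC.of_anti (D := fun m z => !decide
    (Nat.Partrec.Code.evaln m (Denumerable.ofNat Nat.Partrec.Code z.1) z.2.1 = some z.2.2)) ?_ ?_ ?_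
  · refine Primrec.to_comp ?_
    refine Primrec.not.comp (Primrec.eq.decide.comp ?_ ?_)
    · refine Nat.Partrec.Code.primrec_evaln.comp ((Primrec.fst.pair ((Primrec.ofNat _).comp
        (Primrec.fst.comp Primrec.snd))).pair (Primrec.fst.comp (Primrec.snd.comp Primrec.snd)))
    · exact Primrec.option_some.comp (Primrec.snd.comp (Primrec.snd.comp Primrec.snd))
  · intro z m n hmn
    simp only [Bool.not_eq_true', decide_eq_false_iff_not]
    intro h h'
    exact h (Nat.Partrec.Code.evaln_mono hmn h')
  · intro z
    rw [nR, @decide_eq_true_iff _ (_)]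
    simp only [Bool.not_eq_true', decide_eq_false_iff_not]
    rw [Nat.Partrec.Code.evaln_complete, not_exists]
    rfl

theorem LC_gc : LC (gc T) := by
  refine LC.cond (LC_nR.comp (LC_ix.pair (LC.pair (LC.of_prim prim_gn) (LC_gn (LC_main H)))))
    (LC_main H) (LC_alt H)

omit H in
theorem gn_inj {a b : ℕ} (ha : isS a = true) (hb : isS b = true) (h : gn a = gn b) : a = b := by
  obtain ⟨φ, rfl⟩ := isS_conv ha
  obtain ⟨ψ, rfl⟩ := isS_conv hb
  rw [gn_cd, gn_cd] at h
  rw [gnum_inj h]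

def srch (x m : ℕ) : ℕ := Nat.rec 0 (fun k r => bif isS k && decide (gn k = x) then k else r) m

omit H in
theorem prim_srch : Primrec₂ fun m x => srch x m := by
  refine Primrec.nat_rec' (f := fun z : ℕ × ℕ => z.1) (g := fun z : ℕ × ℕ => 0)
    (h := fun z p => bif isS p.1 && decide (gn p.1 = z.2) then p.1 else p.2)
    Primrec.fst (Primrec.const 0) ?_
  have k : Primrec fun z : (ℕ × ℕ) × ℕ × ℕ => z.2.1 := Primrec.fst.comp Primrec.snd
  have r : Primrec fun z : (ℕ × ℕ) × ℕ × ℕ => z.2.2 := Primrec.snd.comp Primrec.snd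
  have x : Primrec fun z : (ℕ × ℕ) × ℕ × ℕ => z.1.2 := Primrec.snd.comp Primrec.fst
  exact Primrec.cond (Primrec.and.comp (prim_isS.comp k) (Primrec.eq.decide.comp (prim_gn.comp k) x)) k r

omit H in
theorem srch_eq (φ : Sent) (m : ℕ) (h : cd φ < m) : srch (gnum φ) m = cd φ := by
  induction m, h using Nat.le_induction with
  | base =>
    have : srch (gnum φ) (cd φ).succ = bif isS (cd φ) && decide (gn (cd φ) = gnum φ) then cd φ else
      srch (gnum φ) (cd φ) := rfl
    rw [this]; simp [isS_cd, gn_cd]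
  | succ m hm ih =>
    have : srch (gnum φ) (m + 1) = bif isS m && decide (gn m = gnum φ) then m else
      srch (gnum φ) m := rfl
    rw [this, ih]
    cases h : (isS m && decide (gn m = gnum φ))
    · rfl
    · simp only [Bool.and_eq_true, decide_eq_true_eq] at h
      rw [cond_true]
      exact gn_inj h.1 (isS_cd φ) (by rw [h.2, gn_cd])

theorem lim_gc : ∃ F : ℕ → ℕ → ℕ, Computable₂ F ∧
    ∀ φ : Sent, ∃ N, ∀ m ≥ N, F m (gnum φ) = gn (gc T (cd φ)) := by
  obtain ⟨F, cF, hF⟩ := LC_gn (LC_gc H)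
  refine ⟨fun m x => F m (srch x m), cF.comp Computable.fst prim_srch.to_comp, fun φ => ?_⟩
  obtain ⟨N, hN⟩ := hF (cd φ)
  refine ⟨max N (cd φ + 1), fun m hm => ?_⟩
  beta_reduce
  rw [srch_eq φ m (by omega)]
  exact hN m (by omega)

end

section
variable {T : L.Theory} (H : Hp T)
include H

theorem alt_spec (x : ℕ) : isP (alt T x) = true ∧ alt T x ≠ main T x ∧
    im T (alt T x) (main T x) = true ∧ im T (main T x) (alt T x) = true := by
  have : pA T (x, alt T x) = true := find_spec (ex_A H) x
  simp [pA] at this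
  tauto

theorem isP_gc (x : ℕ) : isP (gc T x) = true := by
  rw [gc]
  cases nR (ix x, gn x, gn (main T x))
  · exact (alt_spec H x).1
  · exact isP_main H x

theorem sem_gc (x : ℕ) (M : Type) [L.Structure M] (hM : M ⊨ T) :
    sem (M := M) (gc T x) [] ↔ sem (M := M) (main T x) [] := by
  rw [gc]
  cases nR (ix x, gn x, gn (main T x))
  · exact ⟨(im_iff ..).1 (alt_spec H x).2.2.1 M hM, (im_iff ..).1 (alt_spec H x).2.2.2 M hM⟩
  · rfl

omit H in
theorem isS_of_isP {c : ℕ} (h : isP c = true) : isS c = true := by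
  obtain ⟨φ, rfl, -⟩ := isP_conv h
  exact isS_cd φ

theorem ex_g (φ : Sent) : ∃ ψ : Sent, cd ψ = gc T (cd φ) ∧ IsPi1 ψ := isP_conv (isP_gc H _)

noncomputable def gg (φ : Sent) : Sent := (ex_g H φ).choose

theorem cd_gg (φ : Sent) : cd (gg H φ) = gc T (cd φ) := (ex_g H φ).choose_spec.1
theorem pi_gg (φ : Sent) : IsPi1 (gg H φ) := (ex_g H φ).choose_spec.2

theorem gg_iff (φ : Sent) (M : Type) [L.Structure M] (hM : M ⊨ T) :
    M ⊨ gg H φ ↔ sem (M := M) (main T (cd φ)) [] := by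
  rw [← sem_sent, cd_gg, sem_gc H _ _ hM]

/-! ### not recursive -/

omit H in
def sy : ℕ → Sent
  | 0 => BoundedFormula.falsum
  | e + 1 => BoundedFormula.imp BoundedFormula.falsum (sy e)

omit H in
theorem fls_sy (e : ℕ) : (fls (sy e)).length = 2 * e + 1 := by
  induction e with
  | zero => simp [fls, sy, BoundedFormula.listEncode]
  | succ e ih =>
    simp only [fls, List.length_map] at ih
    simp [fls, sy, BoundedFormula.listEncode, ih]
    omega

omit H in
theorem ix_sy (e : ℕ) : ix (cd (sy e)) = e := by
  rw [ix, gn_cd, gnum_eq, dls_enc, fls_sy]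
  omega

theorem not_rec : ¬ RecursiveFn (gg H) := by
  rintro ⟨f, cf, hf⟩
  have h1 : Nat.Partrec (fun n => Part.some (f n)) := Partrec.nat_iff.1 cf
  obtain ⟨c, hc⟩ := Nat.Partrec.Code.exists_code.1 h1
  set x := cd (sy (Encodable.encode c)) with hx
  have h2 : f (gn x) = gn (gc T x) := by
    rw [hx, gn_cd, hf, ← gn_cd, cd_gg]
  have h3 : nR (ix x, gn x, gn (main T x)) = true ↔ ¬ gn (main T x) = gn (gc T x) := by
    rw [nR, @decide_eq_true_iff _ (_), hx, ix_sy, ← hx]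
    simp only [Denumerable.ofNat_encode, hc, h2, Part.mem_some_iff]
  cases h : nR (ix x, gn x, gn (main T x)) with
  | true =>
    have h4 : gc T x = main T x := by rw [gc, h]; rfl
    exact h3.1 h (by rw [h4])
  | false =>
    have h4 : gc T x = alt T x := by rw [gc, h]; rfl
    rw [h] at h3
    have h5 : gn (main T x) = gn (gc T x) := by
      by_contra h6; exact absurd (h3.2 h6) (by simp)
    rw [h4] at h5
    exact (alt_spec H x).2.1 (gn_inj (isS_of_isP (alt_spec H x).1) (isS_of_isP (isP_main H x)) h5.symm)

/-! ### main -/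

theorem NN_not {x : ℕ} (h1 : isS x = true) (h2 : cn T x = true) : im T x (tau T (NN T x)) = false := by
  have : pN T (x, NN T x) = true := find_spec (ex_N H) x
  simpa [pN, h1, h2] using this

omit H in
theorem NN_lt {x n : ℕ} (h : n < NN T x) : im T x (tau T n) = true := by
  have : pN T (x, n) = false := by simpa using Nat.notMem_of_lt_sInf h
  simp [pN] at this
  tauto

omit H in
theorem im_trans {x y z : ℕ} (h1 : im T x y = true) (h2 : im T y z = true) : im T x z = true := by
  rw [im_iff] at *
  exact fun M _ hM h => h2 M hM (h1 M hM h)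

omit H in
theorem NN_le_of {x n : ℕ} (h : im T x (tau T n) = false) : NN T x ≤ n := by
  by_contra h'
  rw [NN_lt (by omega)] at h
  exact absurd h (by simp)

theorem NN_eq {x n : ℕ} (h1 : isS x = true) (h2 : cn T x = true) (h : im T x (tau T n) = false)
    (h' : ∀ k < n, im T x (tau T k) = true) : NN T x = n := by
  refine le_antisymm (NN_le_of h) ?_
  by_contra h3
  have := h' (NN T x) (by omega)
  rw [NN_not H h1 h2] at this
  exact absurd this (by simp)

theorem NN_pos {x : ℕ} (h1 : isS x = true) (h2 : cn T x = true) : 1 ≤ NN T x := by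
  by_contra h
  have h0 : NN T x = 0 := by omega
  have := NN_not H h1 h2
  rw [h0, ← Bool.not_eq_true, im_iff] at this
  exact this fun M _ _ _ => sem_top M

omit H in
theorem cond_iff (x n : ℕ) : cond T (x, n) = true ↔ ∀ i ≤ n, isS i = true → sat T i (tau T n) 0 = true →
    sat T i (tau T n) x = true := by
  rw [cond, allB_iff]
  simp only [pc, Nat.lt_succ_iff, Bool.or_eq_true, Bool.not_eq_true', Bool.and_eq_false_iff]
  refine forall_congr' fun i => forall_congr' fun _ => ?_
  cases isS i <;> cases sat T i (tau T n) 0 <;> simp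

theorem main_mono {x y : ℕ} (hx : isS x = true) (hy : isS y = true) (h : im T x y = true) :
    im T (main T x) (main T y) = true := by
  have h' := (im_iff ..).1 h
  rw [im_iff]
  intro M _ hM
  cases cx : cn T x with
  | false =>
    rw [main, cx]
    exact fun h => absurd h (sem_bot M)
  | true =>
    have cy : cn T y = true := by
      obtain ⟨M, _, hM, hs⟩ := (cn_iff ..).1 cx
      exact (cn_iff ..).2 ⟨M, _, hM, h' M hM hs⟩
    have hle : NN T y ≤ NN T x := by
      refine NN_le_of ?_
      by_contra hc
      rw [Bool.not_eq_false] at hc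
      have := im_trans h hc
      rw [NN_not H hx cx] at this
      exact absurd this (by simp)
    have px := NN_pos H hx cx
    have lowx : sem (M := M) (main T x) [] → sem (M := M) (tau T (NN T x - 1)) [] := by
      rw [main, cx]
      cases cond T (x, NN T x)
      · exact id
      · exact tau_mono H (by omega) M hM
    have uy : sem (M := M) (tau T (NN T y)) [] → sem (M := M) (main T y) [] := by
      rw [main, cy]
      cases cond T (y, NN T y)
      · exact tau_mono H (by omega) M hM
      · exact id
    rcases Nat.lt_or_ge (NN T y) (NN T x) with hlt | hge
    · exact fun hs => uy (tau_mono H (by omega) M hM (lowx hs))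
    · have e : NN T y = NN T x := by omega
      cases cdy : cond T (y, NN T y) with
      | false =>
        have : main T y = tau T (NN T x - 1) := by rw [main, cy, cdy, e]; rfl
        rw [this]; exact lowx
      | true =>
        have cdx : cond T (x, NN T x) = true := by
          rw [cond_iff] at cdy ⊢
          rw [e] at cdy
          intro i hi h1 h2
          obtain ⟨M, _, hM, a, b, c⟩ := (sat_iff ..).1 (cdy i hi h1 h2)
          exact (sat_iff ..).2 ⟨M, _, hM, a, b, fun h => c (h' M hM h)⟩
        have h1 : main T y = tau T (NN T x) := by rw [main, cy, cdy, e]; rfl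
        have h2 : main T x = tau T (NN T x) := by rw [main, cx, cdx]; rfl
        rw [h1, h2]; exact id

omit H in
theorem im_sent (φ ψ : Sent) : im T (cd φ) (cd ψ) = true ↔ Implies T φ ψ := by
  rw [im_iff, implies_iff]
  refine forall_congr' fun M => forall_congr' fun _ => ?_
  rw [sem_sent, sem_sent]

omit H in
theorem cn_sent (φ : Sent) : cn T (cd φ) = true ↔ ConsistentWith T φ := by
  rw [cn_iff, cons_iff]
  refine exists_congr fun M => exists_congr fun _ => ?_
  rw [sem_sent]

theorem cn_true {φ : Sent} (h : TrueInN φ) : cn T (cd φ) = true :=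
  (cn_iff ..).2 ⟨ℕ, _, H.nat, (sem_sent φ).2 h⟩

theorem gg_mono : Monotone' T (gg H) := by
  intro φ ψ h
  rw [prov_iff] at h ⊢
  intro M _ hM
  rw [r_imp, gg_iff H φ M hM, gg_iff H ψ M hM]
  refine (im_iff ..).1 (main_mono H (isS_cd φ) (isS_cd ψ) ?_) M hM
  rw [im_sent, implies_iff]
  intro M _ hM
  exact (r_imp ..).1 (h M hM)

noncomputable def ts (n : ℕ) : Sent := (isP_conv (tau_ok H n).1).choose
theorem cd_ts (n : ℕ) : cd (ts H n) = tau T n := (isP_conv (tau_ok H n).1).choose_spec.1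
theorem ts_iff (n : ℕ) (M : Type) [L.Structure M] : M ⊨ ts H n ↔ sem (M := M) (tau T n) [] := by
  rw [← sem_sent, cd_ts]
theorem ts_mono {m n : ℕ} (h : m ≤ n) (M : Type) [L.Structure M] (hM : M ⊨ T) (hs : M ⊨ ts H n) :
    M ⊨ ts H m := by
  rw [ts_iff] at *
  exact tau_mono H h M hM hs
theorem ts_true (n : ℕ) : TrueInN (ts H n) := by
  have := tau_ok H n
  exact (ts_iff H n ℕ).2 (H.pi _ this.1 this.2)

theorem id_case (χ : Sent) (hχ : TrueInN χ) : ∃ φ : Sent, TrueInN φ ∧ Implies T φ χ ∧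
    EquivMod T (φ ⊓ gg H φ) φ := by
  -- a late index at which the chain leaves the sentence
  let P : ℕ → Prop := fun j => im T (cd (χ ⊓ ts H (cd χ))) (tau T j) = false
  have hex : ∃ j, P j := by
    have ht : TrueInN (χ ⊓ ts H (cd χ)) := (r_inf ..).2 ⟨hχ, ts_true H _⟩
    exact ⟨_, NN_not H (isS_cd _) (cn_true H ht)⟩
  obtain ⟨j, hj, hmin⟩ : ∃ j, P j ∧ ∀ k < j, ¬ P k := by
    classical exact ⟨Nat.find hex, Nat.find_spec hex, fun k hk => Nat.find_min hex hk⟩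
  have hjc : cd χ < j := by
    by_contra hle
    have hj' : im T (cd (χ ⊓ ts H (cd χ))) (tau T j) = false := hj
    rw [← Bool.not_eq_true, im_iff] at hj'
    refine hj' fun M _ hM hs => ?_
    rw [sem_sent, r_inf] at hs
    exact (ts_iff H j M).1 (ts_mono H (by omega) M hM hs.2)
  have hprev : im T (cd (χ ⊓ ts H (cd χ))) (tau T (j - 1)) = true := by
    have := hmin (j - 1) (by omega)
    rwa [Bool.not_eq_false] at this
  let φ : Sent := χ ⊓ ts H (j - 1)
  have ht : TrueInN φ := (r_inf ..).2 ⟨hχ, ts_true H _⟩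
  have hc := cn_true H ht
  have hN : NN T (cd φ) = j := by
    refine NN_eq H (isS_cd _) hc ?_ ?_
    · have hj' : im T (cd (χ ⊓ ts H (cd χ))) (tau T j) = false := hj
      rw [← Bool.not_eq_true] at hj' ⊢
      intro h
      refine hj' (im_trans ?_ h)
      rw [im_sent, implies_iff]
      intro M _ hM hs
      refine (r_inf ..).2 ⟨((r_inf ..).1 hs).1, ?_⟩
      rw [ts_iff]
      exact (im_iff ..).1 hprev M hM ((sem_sent _).2 hs)
    · intro k hk
      rw [← cd_ts H k, im_sent, implies_iff]
      intro M _ hM hs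
      exact ts_mono H (by omega) M hM ((r_inf ..).1 hs).2
  have hcond : cond T (cd φ, j) = false := by
    rw [← Bool.not_eq_true, cond_iff]
    intro h
    have h1 : sat T (cd χ) (tau T j) 0 = true := by
      refine (sat_iff ..).2 ⟨ℕ, _, H.nat, (sem_sent _).2 hχ, (ts_iff H j ℕ).1 (ts_true H j), ?_⟩
      exact fun h => (sem_F [] 0).1 h
    obtain ⟨M, _, hM, a, b, c⟩ := (sat_iff ..).1 (h (cd χ) (by omega) (isS_cd χ) h1)
    refine c ((sem_sent φ).2 ((r_inf ..).2 ⟨(sem_sent χ).1 a, ?_⟩))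
    exact ts_mono H (by omega) M hM ((ts_iff H j M).2 b)
  have hmain : main T (cd φ) = tau T (j - 1) := by
    rw [main, hc, hN, hcond]; rfl
  refine ⟨φ, ht, (implies_iff ..).2 fun M _ _ h => ((r_inf ..).1 h).1, (prov_iff ..).2 fun M _ hM => ?_⟩
  rw [r_iff, r_inf φ (gg H φ), gg_iff H φ M hM, hmain, ← ts_iff H]
  exact ⟨And.left, fun h => ⟨h, ((r_inf ..).1 h).2⟩⟩

theorem con_case {con : Sent → Sent} (hcon : IsConOperator T con) (χ : Sent) (hχ : TrueInN χ) :
    ∃ φ : Sent, TrueInN φ ∧ Implies T φ χ ∧ EquivMod T (φ ⊓ gg H φ) (φ ⊓ con φ) := by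
  have conc : ∀ φ : Sent, (∃ (M : Type) (_ : L.Structure M), M ⊨ T ∧ M ⊨ φ) → TrueInN (con φ) :=
    fun φ h => (hcon.true_iff φ).2 ((cons_iff ..).2 h)
  have cmono : ∀ φ ψ : Sent, Implies T φ ψ → ∀ (M : Type) [L.Structure M], M ⊨ T → M ⊨ con φ → M ⊨ con ψ :=
    fun φ ψ h M _ hM => (r_imp ..).1 ((prov_iff ..).1 (hcon.prov_mono φ ψ h) M hM)
  have htc : TrueInN (con χ) := conc χ ⟨ℕ, _, H.nat, hχ⟩
  let χ1 : Sent := χ ⊓ (con χ).not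
  have h1 : ConsistentWith T χ1 := by
    have := hcon.goedel2 χ ((cons_iff ..).2 ⟨ℕ, _, H.nat, hχ⟩)
    rw [implies_iff] at this
    push Not at this
    obtain ⟨M, _, hM, a, b⟩ := this
    exact (cons_iff ..).2 ⟨M, _, hM, (r_inf ..).2 ⟨a, (r_not ..).2 b⟩⟩
  have h1c : cn T (cd χ1) = true := (cn_sent χ1).2 h1
  obtain ⟨j, hj⟩ : ∃ j, NN T (cd χ1) = j := ⟨_, rfl⟩
  have jpos : 1 ≤ j := hj ▸ NN_pos H (isS_cd _) h1c
  have hjn : ¬ Implies T χ1 (ts H j) := by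
    rw [← im_sent, cd_ts, ← hj, NN_not H (isS_cd _) h1c]; simp
  have hjl : Implies T χ1 (ts H (j - 1)) := by
    rw [← im_sent, cd_ts]; exact NN_lt (by omega)
  let ρ : Sent := ts H j
  let χ2 : Sent := χ ⊓ (ts H (j - 1) ⊓ (con χ ⟹ ρ))
  have r2 : ∀ (M : Type) [L.Structure M], M ⊨ χ2 ↔ M ⊨ χ ∧ M ⊨ ts H (j - 1) ∧ (M ⊨ con χ → M ⊨ ρ) := by
    intro M _; rw [r_inf, r_inf, r_imp]
  have t2 : TrueInN χ2 := (r2 ℕ).2 ⟨hχ, ts_true H _, fun _ => ts_true H _⟩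
  have hne : ∃ (M : Type) (_ : L.Structure M), M ⊨ T ∧ M ⊨ χ2 ∧ ¬ M ⊨ ρ := by
    rw [implies_iff] at hjn
    push Not at hjn
    obtain ⟨M, _, hM, a, b⟩ := hjn
    have a' := (r_inf ..).1 a
    exact ⟨M, _, hM, (r2 M).2 ⟨a'.1, (implies_iff ..).1 hjl M hM a, fun h => absurd h ((r_not ..).1 a'.2)⟩, b⟩
  -- the finite conjunction
  have hfin : ∀ n : ℕ, ∃ σ : Sent, TrueInN σ ∧ ∀ i < n, ∀ ζ : Sent, cd ζ = i →
      (∃ (M : Type) (_ : L.Structure M), M ⊨ T ∧ M ⊨ (ζ ⊓ ρ)) → Implies T σ (con (ζ ⊓ ρ)) := by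
    intro n
    induction n with
    | zero => exact ⟨χ, hχ, fun i hi => absurd hi (by omega)⟩
    | succ n ih =>
      obtain ⟨σ, hσ, h⟩ := ih
      by_cases hz : ∃ ζ : Sent, cd ζ = n ∧ ∃ (M : Type) (_ : L.Structure M), M ⊨ T ∧ M ⊨ (ζ ⊓ ρ)
      · obtain ⟨ζ, hζ, hm⟩ := hz
        refine ⟨σ ⊓ con (ζ ⊓ ρ), (r_inf ..).2 ⟨hσ, conc _ hm⟩, fun i hi ξ hξ hm' => ?_⟩
        rw [implies_iff]
        intro M _ hM hs
        rw [r_inf] at hs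
        rcases Nat.lt_succ_iff_lt_or_eq.1 hi with hi | hi
        · exact (implies_iff ..).1 (h i hi ξ hξ hm') M hM hs.1
        · have : ξ = ζ := cd_inj (by rw [hξ, hζ, hi])
          rw [this]; exact hs.2
      · refine ⟨σ, hσ, fun i hi ξ hξ hm' => ?_⟩
        rcases Nat.lt_succ_iff_lt_or_eq.1 hi with hi | hi
        · exact h i hi ξ hξ hm'
        · exact absurd ⟨ξ, by rw [hξ, hi], hm'⟩ hz
  obtain ⟨σ, tσ, hσ⟩ := hfin (j + 1)
  let κ : Sent := χ2 ⊓ ρ.not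
  let ψ : Sent := χ2 ⊓ (ρ ⟹ (con κ ⊓ σ))
  have rψ : ∀ (M : Type) [L.Structure M], M ⊨ ψ ↔ M ⊨ χ2 ∧ (M ⊨ ρ → M ⊨ con κ ∧ M ⊨ σ) := by
    intro M _
    refine (r_inf χ2 _).trans (and_congr_right fun _ => ?_)
    rw [r_imp, r_inf]
  have tκ : TrueInN (con κ) := by
    obtain ⟨M, _, hM, a, b⟩ := hne
    exact conc κ ⟨M, _, hM, (r_inf ..).2 ⟨a, (r_not ..).2 b⟩⟩
  have tψ : TrueInN ψ := (rψ ℕ).2 ⟨t2, fun _ => ⟨tκ, tσ⟩⟩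
  have hc := cn_true H tψ
  have hN : NN T (cd ψ) = j := by
    refine NN_eq H (isS_cd _) hc ?_ ?_
    · rw [← Bool.not_eq_true, ← cd_ts H j, im_sent, implies_iff]
      intro h
      obtain ⟨M, _, hM, a, b⟩ := hne
      exact b (h M hM ((rψ M).2 ⟨a, fun h => absurd h b⟩))
    · intro k hk
      rw [← cd_ts H k, im_sent, implies_iff]
      intro M _ hM hs
      exact ts_mono H (by omega) M hM ((r2 M).1 ((rψ M).1 hs).1).2.1
  have hcond : cond T (cd ψ, j) = true := by
    rw [cond_iff]
    intro i hi his hsat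
    obtain ⟨ζ, rfl⟩ := isS_conv his
    have hm : ∃ (M : Type) (_ : L.Structure M), M ⊨ T ∧ M ⊨ (ζ ⊓ ρ) := by
      obtain ⟨M, _, hM, a, b, -⟩ := (sat_iff ..).1 hsat
      exact ⟨M, _, hM, (r_inf ..).2 ⟨(sem_sent ζ).1 a, (ts_iff H j M).2 b⟩⟩
    have hi' := hσ (cd ζ) (by omega) ζ rfl hm
    have hg := hcon.goedel2 (ζ ⊓ ρ) ((cons_iff ..).2 hm)
    rw [implies_iff] at hg
    push Not at hg
    obtain ⟨M, _, hM, a, b⟩ := hg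
    have a' := (r_inf ..).1 a
    refine (sat_iff ..).2 ⟨M, _, hM, (sem_sent ζ).2 a'.1, (ts_iff H j M).1 a'.2, fun h => b ?_⟩
    rw [sem_sent] at h
    exact (implies_iff ..).1 hi' M hM (((rψ M).1 h).2 a'.2).2
  have hmain : main T (cd ψ) = tau T j := by
    rw [main, hc, hN, hcond]; rfl
  refine ⟨ψ, tψ, (implies_iff ..).2 fun M _ _ h => ((r2 M).1 ((rψ M).1 h).1).1,
    (prov_iff ..).2 fun M _ hM => ?_⟩
  rw [r_iff, r_inf ψ (gg H ψ), r_inf ψ (con ψ), gg_iff H ψ M hM, hmain, ← ts_iff H]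
  constructor
  · rintro ⟨a, b⟩
    refine ⟨a, ?_⟩
    refine cmono κ ψ ((implies_iff ..).2 fun M _ _ h => ?_) M hM (((rψ M).1 a).2 b).1
    have h' := (r_inf ..).1 h
    exact (rψ M).2 ⟨h'.1, fun h => absurd h ((r_not ..).1 h'.2)⟩
  · rintro ⟨a, b⟩
    refine ⟨a, ((r2 M).1 ((rψ M).1 a).1).2.2 ?_⟩
    exact cmono ψ χ ((implies_iff ..).2 fun M _ _ h => ((r2 M).1 ((rψ M).1 h).1).1) M hM b

end

/-- Walsh.  There is a limit-recursive (recursive in the halting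
problem, via the Shoenfield limit lemma, but not recursive) monotone function `g` with
`Π₁` values which agrees with the consistency operator on arbitrarily strong true
sentences and agrees with the identity operator on arbitrarily strong true sentences
(cofinally in the ultrafilter of true sentences ordered by implication over `T`). -/
theorem statement_5
    (T ea : L.Theory) (hT_sound : Sound T) (hT_rec : RecursivelyAxiomatized T)
    (hea : IsEA ea) (hext : ea ⊆ T)
    (con : Sent → Sent) (hcon : IsConOperator T con) :
    ∃ g : Sent → Sent,
      (∃ F : ℕ → ℕ → ℕ, Computable₂ F ∧
        ∀ φ : Sent, ∃ N, ∀ m ≥ N, F m (gnum φ) = gnum (g φ)) ∧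
      ¬ RecursiveFn g ∧
      Monotone' T g ∧
      (∀ φ : Sent, IsPi1 (g φ)) ∧
      (∀ χ : Sent, TrueInN χ → ∃ φ : Sent, TrueInN φ ∧ Implies T φ χ ∧
        EquivMod T (φ ⊓ g φ) (φ ⊓ con φ)) ∧
      (∀ χ : Sent, TrueInN χ → ∃ φ : Sent, TrueInN φ ∧ Implies T φ χ ∧
        EquivMod T (φ ⊓ g φ) φ) := by
  have H : Hp T := mk_Hp hT_sound hT_rec hea hext hcon
  refine ⟨gg H, ?_, not_rec H, gg_mono H, pi_gg H, con_case H hcon, id_case H⟩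
  obtain ⟨F, cF, hF⟩ := lim_gc H
  refine ⟨F, cF, fun φ => ?_⟩
  obtain ⟨N, hN⟩ := hF φ
  exact ⟨N, fun m hm => by rw [hN m hm, ← cd_gg H, gn_cd]⟩

end ArithFormalization
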